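/- For every ε > 0 there exists a natural number k = k(ε) such that for every odd prime p, every real K ≥ 1, all sets A,B ⊆ F_p with 0 ∉ A, A nonempty, |B| ≥ p^ε and |A+B| ≤ K|A|, and every λ ∈ F_p with λ ≠ 0, the number of pairs (a1,a2) ∈ A×A with a1^{−1} − a2^{−1} = λ is at most K²|A|²/p + 2K|A|·p^{−1/2^{k+2}}. -/

import Mathlib

open Finset

/-- The sumset `A + B = {a + b : a ∈ A, b ∈ B}`. -/
def sumSet (p : ℕ) (A B : Finset (ZMod p)) : Finset (ZMod p) :=
  (A ×ˢ B).image fun x => x.1 + x.2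

/-!
In the action of `SL₂(F_p)` on the projective line let `u(b)` be the translation `x ↦ x + b` and
`h(l)` the map with `x⁻¹ ↦ x⁻¹ + l`. If `a₁⁻¹ - a₂⁻¹ = l`, then `g = u(b₁) h(l) u(-b₂)` sends
`a₂ + b₂` to `a₁ + b₁` for all `b₁, b₂ ∈ B`, so the number of such pairs is at most the correlation
of the indicator of `A + B` with its translates by a random such `g`. The mean of the indicator
contributes `|A + B|² / p`. The action is 2-transitive, so the contribution of the mean-zero part is
controlled by the return probabilities of the convolution powers `κ^(2^j)` of the symmetrised law
`κ` of `g`.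

These return probabilities decrease; if they stall, the Balog–Szemerédi–Gowers theorem produces an
approximate subgroup `S` of `SL₂(F_p)` carrying a large part of the mass of `κ`. As `l ≠ 0`, the
words of the walk then put unipotents with two distinct fixed points into `S⁴`, and counting
products of transverse unipotents forces `|S|` to be nearly `p³`. Hence boundedly many squarings, in
terms of `ε`, bring the return probability below `p^(-5/2)`. For `p` bounded in terms of `ε` the
claim is trivial once `k` is large.
-/

section InverseDifferences

open scoped Pointwise MatrixGroups

/-! ### Convolution on a finite group -/

section Averaging

variable {ι : Type*} [Fintype ι]

lemma exists_le_of_le_sum_weight_mul {ν φ : ι → ℝ} {c : ℝ} (hν : ∀ i, 0 ≤ ν i)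
    (hsum : ∑ i, ν i = 1) (hc : c ≤ ∑ i, ν i * φ i) : ∃ i, c ≤ φ i := by
  by_contra! hlt
  obtain ⟨i, -, hi⟩ : ∃ i ∈ univ, ν i ≠ 0 :=
    exists_ne_zero_of_sum_ne_zero (by rw [hsum]; exact one_ne_zero)
  have : ∑ i, ν i * φ i < ∑ i, ν i * c :=
    sum_lt_sum (fun j _ => mul_le_mul_of_nonneg_left (hlt j).le (hν j))
      ⟨i, mem_univ i, mul_lt_mul_of_pos_left (hlt i) ((hν i).lt_of_ne' hi)⟩
  rw [← sum_mul, hsum, one_mul] at this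
  exact this.not_ge hc

end Averaging

/-- Convolution of real functions on a finite group: `(f ⋆ g) x = ∑ y, f y * g (y⁻¹ * x)`. -/
noncomputable def groupConv {G : Type*} [Group G] [Fintype G] (f g : G → ℝ) (x : G) :
    ℝ :=
  ∑ y, f y * g (y⁻¹ * x)

local infixl:70 " ⋆ " => groupConv

section Convolution

variable {G : Type*} [Group G] [Fintype G]

/-- Symmetric probability densities on a finite group. -/
structure IsSymmProb (f : G → ℝ) : Prop where
  nonneg : ∀ x, 0 ≤ f x
  inv_eq : ∀ x, f x⁻¹ = f x
  sum_eq_one : ∑ x, f x = 1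

/-- The matrix of right convolution by `f`, i.e. the weighted adjacency matrix of the Cayley graph
with weights `f`. -/
def cayleyMatrix (f : G → ℝ) : Matrix G G ℝ := Matrix.of fun x y => f (x⁻¹ * y)

lemma cayleyMatrix_mul (f g : G → ℝ) :
    cayleyMatrix f * cayleyMatrix g = cayleyMatrix (f ⋆ g) := by
  ext x z
  simp only [Matrix.mul_apply, cayleyMatrix, Matrix.of_apply, groupConv]
  rw [← Equiv.sum_comp (Equiv.mulLeft x)]
  simp [mul_assoc]

lemma sum_groupConv (f g : G → ℝ) : ∑ x, (f ⋆ g) x = (∑ x, f x) * ∑ x, g x := by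
  simp only [groupConv]
  rw [sum_comm, sum_mul]
  refine sum_congr rfl fun y _ => ?_
  rw [← mul_sum, ← Equiv.sum_comp (Equiv.mulLeft y⁻¹) g]
  rfl

lemma groupConv_inv (f g : G → ℝ) (x : G) :
    (f ⋆ g) x⁻¹ = ((fun y => g y⁻¹) ⋆ fun y => f y⁻¹) x := by
  simp only [groupConv]
  rw [← Equiv.sum_comp (Equiv.mulLeft x⁻¹)]
  simp [mul_comm]

lemma groupConv_le {f g : G → ℝ} {M : ℝ} (hf : ∀ x, 0 ≤ f x) (hsum : ∑ x, f x = 1)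
    (hg : ∀ x, g x ≤ M) (x : G) : (f ⋆ g) x ≤ M :=
  calc (f ⋆ g) x ≤ ∑ y, f y * M :=
        sum_le_sum fun y _ => mul_le_mul_of_nonneg_left (hg _) (hf y)
    _ = M := by rw [← sum_mul, hsum, one_mul]

namespace IsSymmProb

variable {f : G → ℝ}

lemma conv_self (hf : IsSymmProb f) : IsSymmProb (f ⋆ f) where
  nonneg _ := sum_nonneg fun _ _ => mul_nonneg (hf.nonneg _) (hf.nonneg _)
  inv_eq x := by simp only [groupConv_inv, hf.inv_eq]
  sum_eq_one := by rw [sum_groupConv, hf.sum_eq_one, one_mul]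

lemma conv_self_one (hf : IsSymmProb f) : (f ⋆ f) 1 = ∑ x, f x ^ 2 := by
  simp only [groupConv, mul_one, hf.inv_eq, sq]

lemma conv_self_eq_sum_mul_right (hf : IsSymmProb f) (x : G) :
    (f ⋆ f) x = ∑ y, f y * f (y * x) := by
  simp only [groupConv]
  rw [← Equiv.sum_comp (Equiv.inv G)]
  simp [hf.inv_eq]

lemma conv_self_le_conv_self_one (hf : IsSymmProb f) (x : G) : (f ⋆ f) x ≤ (f ⋆ f) 1 := by
  have hshift : ∑ y, f (y * x) ^ 2 = ∑ y, f y ^ 2 :=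
    Equiv.sum_comp (Equiv.mulRight x) fun y => f y ^ 2
  calc (f ⋆ f) x = ∑ y, f y * f (y * x) := hf.conv_self_eq_sum_mul_right x
    _ ≤ ∑ y, (f y ^ 2 + f (y * x) ^ 2) / 2 :=
        sum_le_sum fun y _ => by linarith [two_mul_le_add_sq (f y) (f (y * x))]
    _ = (f ⋆ f) 1 := by
        rw [← sum_div, sum_add_distrib, hshift, hf.conv_self_one]; ring

lemma isSymm_cayleyMatrix (hf : IsSymmProb f) : (cayleyMatrix f).IsSymm := by
  ext x y
  simp only [Matrix.transpose_apply, cayleyMatrix, Matrix.of_apply]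
  rw [← hf.inv_eq (y⁻¹ * x)]
  simp

lemma sum_mul_vecMul_cayleyMatrix_conv_self (hf : IsSymmProb f) :
    ∑ y, f y * Matrix.vecMul f (cayleyMatrix (f ⋆ f)) y = (f ⋆ f ⋆ (f ⋆ f)) 1 := by
  have hterm (x : G) : ∑ y, f y * (f x * (f ⋆ f) (x⁻¹ * y)) =
      ∑ z, f x * f (x * z) * (f ⋆ f) z := by
    rw [← Equiv.sum_comp (Equiv.mulLeft x)]
    exact sum_congr rfl fun z _ => by simp; ring
  simp only [Matrix.vecMul, dotProduct, cayleyMatrix, Matrix.of_apply, mul_sum]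
  rw [sum_comm, sum_congr rfl fun x _ => hterm x, sum_comm, hf.conv_self.conv_self_one]
  refine sum_congr rfl fun z _ => ?_
  rw [← sum_mul, ← hf.conv_self_eq_sum_mul_right, sq]

end IsSymmProb

end Convolution

/-! ### The weighted Balog–Szemerédi–Gowers theorem -/

section BalogSzemerediGowers

variable {X : Type*} [Fintype X]

-- Keep the points that see little bad weight: any two of them have many common good neighbours.
open Classical in
lemma exists_heavy_subset_of_few_bad_pairs {w : X → ℝ} (hw : ∀ x, 0 ≤ w x) {good : X → X → Prop}
    (hsymm : ∀ x y, good x y → good y x) (hpos : 0 < ∑ x, w x)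
    (hbad : 8 * ∑ x, w x * ∑ y with ¬ good x y, w y ≤ (∑ x, w x) ^ 2) :
    ∃ A : Finset X, (∑ x, w x) / 2 ≤ ∑ x ∈ A, w x ∧
      ∀ x ∈ A, ∀ y ∈ A, (∑ x, w x) / 2 ≤ ∑ z with good x z ∧ good z y, w z := by
  set d := ∑ x, w x
  set badWeight : X → ℝ := fun x => ∑ y with ¬ good x y, w y
  have badWeight_nonneg (x : X) : 0 ≤ badWeight x := sum_nonneg fun y _ => hw y
  refine ⟨univ.filter fun x => badWeight x ≤ d / 4, ?_, fun x hx y hy => ?_⟩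
  · have hmarkov : (∑ x with ¬ badWeight x ≤ d / 4, w x) * (d / 4) ≤ ∑ x, w x * badWeight x := by
      rw [sum_mul]
      refine (sum_le_sum fun x hx => ?_).trans (sum_le_sum_of_subset_of_nonneg (subset_univ _)
        fun x _ _ => mul_nonneg (hw x) (badWeight_nonneg x))
      exact mul_le_mul_of_nonneg_left (not_le.1 (mem_filter.1 hx).2).le (hw x)
    have hsplit := sum_filter_add_sum_filter_not univ (fun x => badWeight x ≤ d / 4) w
    nlinarith
  · have hcover : d ≤ ∑ z with good x z ∧ good z y, w z + badWeight x + badWeight y := by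
      simp only [d, badWeight, sum_filter, ← sum_add_distrib]
      refine sum_le_sum fun z _ => ?_
      have := hw z
      have := hsymm y z
      split_ifs <;> first | linarith | tauto
    have hbx := (mem_filter.1 hx).2
    have hby := (mem_filter.1 hy).2
    linarith

variable {ν : X → ℝ} {F : Matrix X X ℝ} {M D : ℝ}

lemma sq_le_sum_mul_vecMul_sq (hν : ∀ x, 0 ≤ ν x) (hsum : ∑ x, ν x = 1) {e : ℝ} (he : 0 ≤ e)
    (henergy : e ≤ ∑ y, ν y * Matrix.vecMul ν F y) :
    e ^ 2 ≤ ∑ y, ν y * Matrix.vecMul ν F y ^ 2 := by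
  have hcs : (∑ y, ν y * Matrix.vecMul ν F y) ^ 2 ≤
      (∑ y, ν y) * ∑ y, ν y * Matrix.vecMul ν F y ^ 2 :=
    sum_sq_le_sum_mul_sum_of_sq_le_mul _ (fun y _ => hν y)
      (fun y _ => mul_nonneg (hν y) (sq_nonneg _)) (fun y _ => le_of_eq (by ring))
  rw [hsum, one_mul] at hcs
  exact (pow_le_pow_left₀ he henergy 2).trans hcs

open Classical in
lemma sum_mul_low_codegree_le (hν : ∀ x, 0 ≤ ν x) (hsum : ∑ x, ν x = 1) (hsup : ∀ x, ν x ≤ M)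
    (hF : ∀ x y, 0 ≤ F x y) (hsymm : F.IsSymm) {τ : ℝ} (hM : 0 ≤ M) (hτ : 0 ≤ τ) :
    ∑ y, ν y * ∑ x, ν x * F x y * ∑ z with (F * F) x z < τ, ν z * F z y ≤ M * τ := by
  have hcodegree (x z : X) : ∑ y, ν y * (F x y * F z y) ≤ M * (F * F) x z := by
    rw [Matrix.mul_apply, mul_sum]
    refine sum_le_sum fun y _ => ?_
    rw [hsymm.apply z y]
    exact mul_le_mul_of_nonneg_right (hsup y) (mul_nonneg (hF x y) (hF z y))
  have hswap : ∑ y, ν y * ∑ x, ν x * F x y * ∑ z with (F * F) x z < τ, ν z * F z y =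
      ∑ x, ∑ z with (F * F) x z < τ, ν x * ν z * ∑ y, ν y * (F x y * F z y) := by
    simp only [mul_sum]
    rw [sum_comm]
    refine sum_congr rfl fun x _ => ?_
    rw [sum_comm]
    exact sum_congr rfl fun z _ => sum_congr rfl fun y _ => by ring
  have hterm (x z : X) (hz : (F * F) x z < τ) :
      ν x * ν z * ∑ y, ν y * (F x y * F z y) ≤ ν x * ν z * (M * τ) :=
    mul_le_mul_of_nonneg_left ((hcodegree x z).trans (mul_le_mul_of_nonneg_left hz.le hM))
      (mul_nonneg (hν x) (hν z))
  calc _ ≤ ∑ x, ∑ z, ν x * ν z * (M * τ) := by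
        rw [hswap]
        refine sum_le_sum fun x _ => (sum_le_sum fun z hz => hterm x z (mem_filter.1 hz).2).trans
          (sum_le_sum_of_subset_of_nonneg (subset_univ _) fun z _ _ => ?_)
        exact mul_nonneg (mul_nonneg (hν x) (hν z)) (mul_nonneg hM hτ)
    _ = M * τ := by simp only [← sum_mul, ← mul_sum, hsum, mul_one, one_mul]

-- Dependent random choice: a `ν`-random `y` has, on average, a large neighbourhood in which few
-- pairs have small codegree.
open Classical in
lemma exists_vecMul_sq_sub_low_codegree (hν : ∀ x, 0 ≤ ν x) (hsum : ∑ x, ν x = 1)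
    (hsup : ∀ x, ν x ≤ M) (hF : ∀ x y, 0 ≤ F x y) (hsymm : F.IsSymm) (hM : 0 ≤ M) (hD : 0 < D)
    (henergy : M / D ≤ ∑ y, ν y * Matrix.vecMul ν F y) :
    ∃ y, M ^ 2 / (2 * D ^ 2) ≤ Matrix.vecMul ν F y ^ 2 -
      8 * ∑ x, ν x * F x y * ∑ z with (F * F) x z < M / (16 * D ^ 2), ν z * F z y := by
  refine exists_le_of_le_sum_weight_mul hν hsum ?_
  have hmain := sq_le_sum_mul_vecMul_sq hν hsum (by positivity) henergy
  have hbad := sum_mul_low_codegree_le hν hsum hsup hF hsymm (τ := M / (16 * D ^ 2)) hM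
    (by positivity)
  have hconst : M ^ 2 / (2 * D ^ 2) = (M / D) ^ 2 - 8 * (M * (M / (16 * D ^ 2))) := by
    field_simp; ring
  simp only [mul_sub, sum_sub_distrib, mul_left_comm _ (8 : ℝ), ← mul_sum univ _ (8 : ℝ)]
  linarith

open Classical in
lemma exists_subset_many_paths (hν : ∀ x, 0 ≤ ν x) (hsum : ∑ x, ν x = 1)
    (hsup : ∀ x, ν x ≤ M) (hF : ∀ x y, 0 ≤ F x y) (hFM : ∀ x y, F x y ≤ M) (hsymm : F.IsSymm)
    (hM : 0 < M) (hD : 0 < D) (henergy : M / D ≤ ∑ y, ν y * Matrix.vecMul ν F y) :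
    ∃ A : Finset X, 1 / (4 * D) ≤ ∑ x ∈ A, ν x ∧ ∀ x ∈ A, ∀ y ∈ A, M / (4 * D) ≤
      #{z | M / (16 * D ^ 2) ≤ (F * F) x z ∧ M / (16 * D ^ 2) ≤ (F * F) z y} * M ^ 2 := by
  obtain ⟨y, hy⟩ := exists_vecMul_sq_sub_low_codegree hν hsum hsup hF hsymm hM.le hD henergy
  set τ := M / (16 * D ^ 2)
  set w : X → ℝ := fun x => ν x * F x y
  have hw (x : X) : 0 ≤ w x := mul_nonneg (hν x) (hF x y)
  have hwν (x : X) : w x ≤ M * ν x :=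
    (mul_le_mul_of_nonneg_left (hFM x y) (hν x)).trans_eq (mul_comm _ _)
  have hwM (x : X) : w x ≤ M ^ 2 :=
    (hwν x).trans ((mul_le_mul_of_nonneg_left (hsup x) hM.le).trans_eq (sq M).symm)
  have hlow : 0 ≤ ∑ x, w x * ∑ z with (F * F) x z < τ, w z :=
    sum_nonneg fun x _ => mul_nonneg (hw x) (sum_nonneg fun z _ => hw z)
  change _ ≤ (∑ x, w x) ^ 2 - 8 * ∑ x, w x * ∑ z with (F * F) x z < τ, w z at hy
  have hconst : 0 ≤ M ^ 2 / (2 * D ^ 2) := by positivity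
  have hdegree : M / (2 * D) ≤ ∑ x, w x := by
    refine (abs_le_of_sq_le_sq' ?_ (sum_nonneg fun x _ => hw x)).2
    have : (M / (2 * D)) ^ 2 = M ^ 2 / (2 * D ^ 2) / 2 := by ring
    linarith
  have hhalf : M / (4 * D) = M / (2 * D) / 2 := by field_simp; norm_num
  obtain ⟨A, hA, hgood⟩ := exists_heavy_subset_of_few_bad_pairs hw
    (good := fun x z => τ ≤ (F * F) x z)
    (fun x z h => by rwa [← sq, (hsymm.pow 2).apply, sq])
    (lt_of_lt_of_le (by positivity) hdegree) (by simp only [not_le]; linarith)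
  refine ⟨A, le_of_mul_le_mul_left ?_ hM, fun x hx z hz => ?_⟩
  · calc M * (1 / (4 * D)) = M / (4 * D) := by ring
      _ ≤ ∑ x ∈ A, w x := by linarith
      _ ≤ M * ∑ x ∈ A, ν x := by rw [mul_sum]; exact sum_le_sum fun x _ => hwν x
  · calc M / (4 * D) ≤ ∑ t with τ ≤ (F * F) x t ∧ τ ≤ (F * F) t z, w t := by
          linarith [hgood x hx z hz]
      _ ≤ #{t | τ ≤ (F * F) x t ∧ τ ≤ (F * F) t z} * M ^ 2 :=
          (sum_le_card_nsmul _ w (M ^ 2) fun t _ => hwM t).trans_eq (nsmul_eq_mul _ _)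

theorem exists_subset_le_mul_mul_mul_apply (hν : ∀ x, 0 ≤ ν x) (hsum : ∑ x, ν x = 1)
    (hsup : ∀ x, ν x ≤ M) (hF : ∀ x y, 0 ≤ F x y) (hFM : ∀ x y, F x y ≤ M) (hsymm : F.IsSymm)
    (hM : 0 < M) (hD : 0 < D) (henergy : M / D ≤ ∑ y, ν y * Matrix.vecMul ν F y) :
    ∃ A : Finset X, 1 / (4 * D) ≤ ∑ x ∈ A, ν x ∧
      ∀ x ∈ A, ∀ y ∈ A, M / (1024 * D ^ 5) ≤ (F * F * (F * F)) x y := by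
  classical
  obtain ⟨A, hA, hpaths⟩ :=
    exists_subset_many_paths hν hsum hsup hF hFM hsymm hM hD henergy
  refine ⟨A, hA, fun x hx y hy => ?_⟩
  have hFF (x z : X) : 0 ≤ (F * F) x z := sum_nonneg fun _ _ => mul_nonneg (hF _ _) (hF _ _)
  set τ := M / (16 * D ^ 2) with hτ
  set good : Finset X := univ.filter fun z => τ ≤ (F * F) x z ∧ τ ≤ (F * F) z y
  calc M / (1024 * D ^ 5) = (1 / (16 * D ^ 2)) ^ 2 * (M / (4 * D)) := by
        field_simp; norm_num
    _ ≤ (1 / (16 * D ^ 2)) ^ 2 * (#good * M ^ 2) := by gcongr; exact hpaths x hx y hy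
    _ = ∑ _z ∈ good, τ * τ := by rw [sum_const, nsmul_eq_mul, hτ]; ring
    _ ≤ ∑ z ∈ good, (F * F) x z * (F * F) z y := sum_le_sum fun z hz => by
        have h := (mem_filter.1 hz).2
        exact mul_le_mul h.1 h.2 (by positivity) (hFF x z)
    _ ≤ (F * F * (F * F)) x y := by
        rw [Matrix.mul_apply (M := F * F)]
        exact sum_le_sum_of_subset_of_nonneg (subset_univ _)
          fun z _ _ => mul_nonneg (hFF x z) (hFF z y)

end BalogSzemerediGowers

/-! ### Approximate groups from small quotient sets -/

section ApproximateGroup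

variable {G : Type*} [Group G] [DecidableEq G]

lemma mulEnergy_inv_left_self (A : Finset G) : mulEnergy A⁻¹ A = mulEnergy A A⁻¹ := by
  refine card_nbij' (fun q => ((q.1.2⁻¹, q.2.2), (q.1.1, q.2.1⁻¹)))
    (fun q => ((q.2.1, q.1.1⁻¹), (q.2.2⁻¹, q.1.2))) ?_ ?_ (fun q _ => by simp) fun q _ => by simp
  · rintro ⟨⟨a, b⟩, c, d⟩ hq
    simp only [coe_filter, mem_product, mem_inv', Set.mem_ofPred_eq, inv_inv] at hq ⊢
    exact ⟨by tauto, by rw [inv_mul_eq_iff_eq_mul, ← mul_assoc, ← hq.2]; simp⟩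
  · rintro ⟨⟨a, b⟩, c, d⟩ hq
    simp only [coe_filter, mem_product, mem_inv', Set.mem_ofPred_eq, inv_inv] at hq ⊢
    exact ⟨by tauto, by rw [eq_inv_mul_iff_mul_eq, ← mul_assoc, hq.2]; simp⟩

lemma convolution_inv_self_le (A Y : Finset G) {a y : G} (ha : a ∈ A) (hy : y ∈ Y) (s : G) :
    A.convolution A⁻¹ s ≤ (A⁻¹ * A).convolution (A⁻¹ * Y) (a⁻¹ * (s * y)) := by
  rw [← card_inter_smul, ← card_inter_smul_inv, ← card_smul_finset a⁻¹]
  refine card_le_card fun x hx => ?_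
  obtain ⟨b, hb, rfl⟩ := mem_smul_finset.1 hx
  obtain ⟨hbA, hbs⟩ := mem_inter.1 hb
  obtain ⟨c, hc, rfl⟩ := mem_smul_finset.1 hbs
  refine mem_inter.2 ⟨mul_mem_mul (inv_mem_inv ha) hbA, mem_smul_finset.2 ⟨y⁻¹ * c, ?_, ?_⟩⟩
  · exact mem_inv'.2 (by simpa using mul_mem_mul (inv_mem_inv hc) hy)
  · simp only [smul_eq_mul]; group

variable [Fintype G]

lemma sum_convolution (A B : Finset G) : ∑ x, A.convolution B x = #A * #B := by
  rw [← card_product]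
  exact (card_eq_sum_card_fiberwise fun _ _ => mem_coe.2 (mem_univ _)).symm

/-- The popular quotients of `A`: those `x` with at least `#A / (2 * K)` representations
`x = a * b⁻¹`, `a b ∈ A`. If `#(A⁻¹ * A) ≤ K * #A`, they form an approximate group. -/
noncomputable def popularQuotients (A : Finset G) (K : ℝ) : Finset G :=
  {x | (#A : ℝ) ≤ 2 * K * A.convolution A⁻¹ x}

variable {A : Finset G} {K : ℝ}

lemma mem_popularQuotients {x : G} :
    x ∈ popularQuotients A K ↔ (#A : ℝ) ≤ 2 * K * A.convolution A⁻¹ x := by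
  simp [popularQuotients]

lemma inv_popularQuotients : (popularQuotients A K)⁻¹ = popularQuotients A K := by
  ext x
  rw [mem_inv', mem_popularQuotients, mem_popularQuotients, convolution_inv, inv_inv]

lemma one_mem_popularQuotients (hK : 1 ≤ K) : 1 ∈ popularQuotients A K := by
  rw [mem_popularQuotients, ← card_inter_smul, one_smul, inter_self]
  nlinarith [(#A).cast_nonneg (α := ℝ)]

lemma card_inv_mul_popularQuotients_mul_le (hA : A.Nonempty) (hK : 0 ≤ K)
    (h : (#(A⁻¹ * A) : ℝ) ≤ K * #A) (Y : Finset G) :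
    (#(A⁻¹ * (popularQuotients A K * Y)) : ℝ) ≤ 2 * K ^ 2 * #(A⁻¹ * Y) := by
  set Z := A⁻¹ * (popularQuotients A K * Y)
  have hrep (z : G) (hz : z ∈ Z) :
      (#A : ℝ) ≤ 2 * K * (A⁻¹ * A).convolution (A⁻¹ * Y) z := by
    obtain ⟨a, ha, w, hw, rfl⟩ := mem_mul.1 hz
    obtain ⟨s, hs, y, hy, rfl⟩ := mem_mul.1 hw
    have hle := convolution_inv_self_le A Y (mem_inv'.1 ha) hy s
    rw [inv_inv] at hle
    refine (mem_popularQuotients.1 hs).trans ?_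
    gcongr
  have hsum : ∑ z ∈ Z, (A⁻¹ * A).convolution (A⁻¹ * Y) z ≤ #(A⁻¹ * A) * #(A⁻¹ * Y) :=
    (sum_le_sum_of_subset (subset_univ Z)).trans_eq (sum_convolution _ _)
  refine le_of_mul_le_mul_right ?_ (Nat.cast_pos (α := ℝ).2 hA.card_pos)
  calc (#Z : ℝ) * #A ≤ ∑ z ∈ Z, 2 * K * (A⁻¹ * A).convolution (A⁻¹ * Y) z := by
        rw [← nsmul_eq_mul]; exact card_nsmul_le_sum _ _ _ hrep
    _ ≤ 2 * K * (#(A⁻¹ * A) * #(A⁻¹ * Y)) := by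
        rw [← mul_sum]; gcongr; exact_mod_cast hsum
    _ ≤ 2 * K * (K * #A * #(A⁻¹ * Y)) := by gcongr
    _ = 2 * K ^ 2 * #(A⁻¹ * Y) * #A := by ring

lemma card_inv_mul_popularQuotients_pow_le (hA : A.Nonempty) (hK : 0 ≤ K)
    (h : (#(A⁻¹ * A) : ℝ) ≤ K * #A) (n : ℕ) :
    (#(A⁻¹ * popularQuotients A K ^ n) : ℝ) ≤ (2 * K ^ 2) ^ n * #A := by
  induction n with
  | zero => simp
  | succ n ih =>
    rw [pow_succ' (popularQuotients A K), pow_succ' (2 * K ^ 2), mul_assoc]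
    exact (card_inv_mul_popularQuotients_mul_le hA hK h _).trans (by gcongr)

lemma card_popularQuotients_pow_le (hA : A.Nonempty) (hK : 0 ≤ K)
    (h : (#(A⁻¹ * A) : ℝ) ≤ K * #A) (n : ℕ) :
    (#(popularQuotients A K ^ n) : ℝ) ≤ (2 * K ^ 2) ^ n * #A :=
  le_trans (mod_cast card_le_card_mul_left hA.inv)
    (card_inv_mul_popularQuotients_pow_le hA hK h n)

lemma card_pow_four_le_card_inv_mul_mul_sum_sq (A : Finset G) :
    #A ^ 4 ≤ #(A⁻¹ * A) * ∑ x, A.convolution A⁻¹ x ^ 2 := by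
  calc #A ^ 4 = #A⁻¹ ^ 2 * #A ^ 2 := by rw [card_inv]; ring
    _ ≤ #(A⁻¹ * A) * mulEnergy A⁻¹ A := le_card_mul_mul_mulEnergy A⁻¹ A
    _ = #(A⁻¹ * A) * ∑ x, A.convolution A⁻¹ x ^ 2 := by
        rw [mulEnergy_inv_left_self, mulEnergy_eq_sum_sq]; rfl

lemma sum_sq_convolution_le (hK : 0 ≤ K) :
    2 * K * ∑ x, (A.convolution A⁻¹ x : ℝ) ^ 2 ≤
      2 * K * #(popularQuotients A K) * #A ^ 2 + #A ^ 3 := by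
  have hterm (x : G) : 2 * K * (A.convolution A⁻¹ x : ℝ) ^ 2 ≤
      (if x ∈ popularQuotients A K then 2 * K * (#A : ℝ) ^ 2 else 0) +
        #A * A.convolution A⁻¹ x := by
    have hle : (A.convolution A⁻¹ x : ℝ) ≤ #A := mod_cast convolution_le_card_left
    split_ifs with hx
    · have : 2 * K * (A.convolution A⁻¹ x : ℝ) ^ 2 ≤ 2 * K * (#A : ℝ) ^ 2 := by gcongr
      have : 0 ≤ (#A : ℝ) * A.convolution A⁻¹ x := by positivity
      linarith
    · rw [mem_popularQuotients, not_le] at hx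
      nlinarith [(A.convolution A⁻¹ x).cast_nonneg (α := ℝ)]
  have hsum : ∑ x, (A.convolution A⁻¹ x : ℝ) = #A ^ 2 := by
    rw [← Nat.cast_sum, sum_convolution, card_inv]; push_cast; ring
  calc 2 * K * ∑ x, (A.convolution A⁻¹ x : ℝ) ^ 2
      ≤ ∑ x, ((if x ∈ popularQuotients A K then 2 * K * (#A : ℝ) ^ 2 else 0) +
          (#A : ℝ) * A.convolution A⁻¹ x) := by rw [mul_sum]; exact sum_le_sum fun x _ => hterm x
    _ = _ := by
        rw [sum_add_distrib, ← mul_sum, hsum]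
        simp only [sum_ite_mem, univ_inter, sum_const, nsmul_eq_mul]
        ring

lemma card_le_mul_card_popularQuotients (hA : A.Nonempty) (hK : 0 ≤ K)
    (h : (#(A⁻¹ * A) : ℝ) ≤ K * #A) : (#A : ℝ) ≤ 2 * K * #(popularQuotients A K) := by
  have hA0 : (0 : ℝ) < #A := mod_cast hA.card_pos
  have henergy : (#A : ℝ) ^ 4 ≤ K * #A * ∑ x, (A.convolution A⁻¹ x : ℝ) ^ 2 :=
    le_trans (mod_cast card_pow_four_le_card_inv_mul_mul_sum_sq A)
      (mul_le_mul_of_nonneg_right h (sum_nonneg fun _ _ => by positivity))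
  refine le_of_mul_le_mul_left ?_ (pow_pos hA0 3)
  nlinarith [sum_sq_convolution_le (A := A) hK]

lemma exists_inv_subset_mul_popularQuotients (hA : A.Nonempty) (hK : 1 ≤ K)
    (h : (#(A⁻¹ * A) : ℝ) ≤ K * #A) :
    ∃ F : Finset G, (#F : ℝ) ≤ 4 * K ^ 3 ∧ A⁻¹ ⊆ F * popularQuotients A K ^ 2 := by
  have hK0 : 0 ≤ K := zero_le_one.trans hK
  have hAS : (#(A⁻¹ * popularQuotients A K) : ℝ) ≤ 4 * K ^ 3 * #(popularQuotients A K) :=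
    calc (#(A⁻¹ * popularQuotients A K) : ℝ) ≤ 2 * K ^ 2 * #A := by
          simpa using card_inv_mul_popularQuotients_pow_le hA hK0 h 1
      _ ≤ 2 * K ^ 2 * (2 * K * #(popularQuotients A K)) := by
          gcongr; exact card_le_mul_card_popularQuotients hA hK0 h
      _ = 4 * K ^ 3 * #(popularQuotients A K) := by ring
  obtain ⟨F, -, hF, hcover⟩ := ruzsa_covering_mul ⟨1, one_mem_popularQuotients hK⟩ hAS
  exact ⟨F, hF, by rwa [div_eq_mul_inv, inv_popularQuotients, ← sq] at hcover⟩

end ApproximateGroup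

section MatrixGrowth

open Matrix

/-! ### Transvections in `SL₂` -/

section Wedge

variable {F : Type*} [Field F]

/-- The determinant of the `2 × 2` matrix with columns `v` and `w`. -/
def wedge (v w : Fin 2 → F) : F := v 0 * w 1 - v 1 * w 0

lemma wedge_self (v : Fin 2 → F) : wedge v v = 0 := by
  rw [wedge]; ring

lemma wedge_swap (v w : Fin 2 → F) : wedge w v = -wedge v w := by
  rw [wedge, wedge]; ring

lemma wedge_add_right (v w x : Fin 2 → F) : wedge v (w + x) = wedge v w + wedge v x := by
  simp only [wedge, Pi.add_apply]; ring

lemma wedge_smul_right (c : F) (v w : Fin 2 → F) : wedge v (c • w) = c * wedge v w := by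
  simp only [wedge, Pi.smul_apply, smul_eq_mul]; ring

lemma wedge_smul_eq_add (v w x : Fin 2 → F) :
    wedge v w • x = wedge x w • v + wedge v x • w := by
  ext i
  fin_cases i <;> simp [wedge] <;> ring

lemma exists_wedge_ne_zero {v : Fin 2 → F} (hv : v ≠ 0) : ∃ w, wedge v w ≠ 0 := by
  by_contra! h
  have h0 := h ![0, 1]
  have h1 := h ![1, 0]
  simp only [wedge, cons_val_zero, cons_val_one, mul_one, mul_zero, sub_zero, zero_sub,
    neg_eq_zero] at h0 h1
  exact hv (funext fun i => by fin_cases i <;> assumption)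

lemma exists_eq_smul_of_wedge_eq_zero {v x : Fin 2 → F} (hv : v ≠ 0) (h : wedge v x = 0) :
    ∃ c : F, x = c • v := by
  obtain ⟨w, hw⟩ := exists_wedge_ne_zero hv
  refine ⟨(wedge v w)⁻¹ * wedge x w, ?_⟩
  rw [mul_smul, eq_inv_smul_iff₀ hw, wedge_smul_eq_add, h, zero_smul, add_zero]

lemma exists_eq_smul_add_smul_of_wedge_ne_zero {v w : Fin 2 → F} (h : wedge v w ≠ 0)
    (x : Fin 2 → F) : ∃ a b : F, x = a • v + b • w := by
  refine ⟨(wedge v w)⁻¹ * wedge x w, (wedge v w)⁻¹ * wedge v x, ?_⟩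
  rw [mul_smul, mul_smul, ← smul_add, eq_inv_smul_iff₀ h, wedge_smul_eq_add]

end Wedge

section SpecialLinear

variable {F : Type*} [Field F]

lemma sl2_smul_zero_apply (g : SL(2, F)) (v : Fin 2 → F) :
    (g • v) 0 = g 0 0 * v 0 + g 0 1 * v 1 := by
  change (g.1 *ᵥ v) 0 = _
  rw [mulVec, dotProduct, Fin.sum_univ_two]

lemma sl2_smul_one_apply (g : SL(2, F)) (v : Fin 2 → F) :
    (g • v) 1 = g 1 0 * v 0 + g 1 1 * v 1 := by
  change (g.1 *ᵥ v) 1 = _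
  rw [mulVec, dotProduct, Fin.sum_univ_two]

lemma sl2_mul_apply (g h : SL(2, F)) (i j : Fin 2) :
    (g * h) i j = g i 0 * h 0 j + g i 1 * h 1 j := by
  refine Eq.trans ?_ (Fin.sum_univ_two fun k => g i k * h k j)
  exact mul_apply

lemma sl2_det_eq (g : SL(2, F)) : g 0 0 * g 1 1 - g 0 1 * g 1 0 = 1 := by
  rw [← det_fin_two]; exact g.2

lemma sl2_ext {g h : SL(2, F)} (h₀₀ : g 0 0 = h 0 0) (h₀₁ : g 0 1 = h 0 1)
    (h₁₀ : g 1 0 = h 1 0) (h₁₁ : g 1 1 = h 1 1) : g = h := by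
  ext i j
  fin_cases i <;> fin_cases j <;> assumption

lemma wedge_smul_smul (g : SL(2, F)) (v w : Fin 2 → F) : wedge (g • v) (g • w) = wedge v w := by
  simp only [wedge, sl2_smul_zero_apply, sl2_smul_one_apply]
  linear_combination (v 0 * w 1 - v 1 * w 0) * sl2_det_eq g

instance faithfulSMul_sl2 : FaithfulSMul SL(2, F) (Fin 2 → F) where
  eq_of_smul_eq_smul h := Subtype.ext (mulVec_injective (funext h))

lemma eq_of_smul_eq_of_wedge_ne_zero {g h : SL(2, F)} {v w : Fin 2 → F} (hvw : wedge v w ≠ 0)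
    (hv : g • v = h • v) (hw : g • w = h • w) : g = h := by
  refine eq_of_smul_eq_smul (α := Fin 2 → F) fun x => ?_
  obtain ⟨a, b, rfl⟩ := exists_eq_smul_add_smul_of_wedge_ne_zero hvw x
  rw [smul_add, smul_add, smul_comm g a, smul_comm g b, hv, hw, smul_comm h a, smul_comm h b]

/-- The transvection `x ↦ x + (t * wedge v x) • v` of the plane, as an element of `SL₂`. -/
def skewTransvection (v : Fin 2 → F) (t : F) : SL(2, F) :=
  ⟨!![1 - t * v 0 * v 1, t * v 0 ^ 2; -(t * v 1 ^ 2), 1 + t * v 0 * v 1], by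
    rw [det_fin_two_of]; ring⟩

lemma coe_skewTransvection (v : Fin 2 → F) (t : F) :
    (skewTransvection v t : Matrix (Fin 2) (Fin 2) F) =
      !![1 - t * v 0 * v 1, t * v 0 ^ 2; -(t * v 1 ^ 2), 1 + t * v 0 * v 1] := rfl

lemma skewTransvection_smul (v : Fin 2 → F) (t : F) (x : Fin 2 → F) :
    skewTransvection v t • x = x + (t * wedge v x) • v := by
  ext i
  fin_cases i
  · simp [sl2_smul_zero_apply, coe_skewTransvection, wedge]; ring
  · simp [sl2_smul_one_apply, coe_skewTransvection, wedge]; ring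

lemma skewTransvection_smul_self (v : Fin 2 → F) (t : F) : skewTransvection v t • v = v := by
  rw [skewTransvection_smul, wedge_self, mul_zero, zero_smul, add_zero]

lemma skewTransvection_zero (v : Fin 2 → F) : skewTransvection v 0 = 1 :=
  eq_of_smul_eq_smul (α := Fin 2 → F) fun x => by
    rw [skewTransvection_smul, zero_mul, zero_smul, add_zero, one_smul]

lemma skewTransvection_mul (v : Fin 2 → F) (s t : F) :
    skewTransvection v s * skewTransvection v t = skewTransvection v (s + t) :=
  eq_of_smul_eq_smul (α := Fin 2 → F) fun x => by
    rw [mul_smul]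
    simp only [skewTransvection_smul, wedge_add_right, wedge_smul_right, wedge_self]
    module

lemma skewTransvection_inv (v : Fin 2 → F) (t : F) :
    (skewTransvection v t)⁻¹ = skewTransvection v (-t) := by
  rw [inv_eq_iff_mul_eq_one, skewTransvection_mul, add_neg_cancel, skewTransvection_zero]

lemma skewTransvection_pow (v : Fin 2 → F) (t : F) (n : ℕ) :
    skewTransvection v t ^ n = skewTransvection v (n * t) := by
  induction n with
  | zero => rw [pow_zero, Nat.cast_zero, zero_mul, skewTransvection_zero]
  | succ n ih => rw [pow_succ, ih, skewTransvection_mul, Nat.cast_succ, add_one_mul]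

lemma skewTransvection_smul_left (c : F) (v : Fin 2 → F) (t : F) :
    skewTransvection (c • v) t = skewTransvection v (c ^ 2 * t) :=
  eq_of_smul_eq_smul (α := Fin 2 → F) fun x => by
    have hwedge : wedge (c • v) x = c * wedge v x := by
      rw [wedge_swap, wedge_smul_right, wedge_swap v x, mul_neg, neg_neg]
    rw [skewTransvection_smul, skewTransvection_smul, hwedge]
    module

lemma conj_skewTransvection (g : SL(2, F)) (v : Fin 2 → F) (t : F) :
    g * skewTransvection v t * g⁻¹ = skewTransvection (g • v) t := by
  rw [mul_inv_eq_iff_eq_mul]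
  refine eq_of_smul_eq_smul (α := Fin 2 → F) fun x => ?_
  rw [mul_smul, mul_smul, skewTransvection_smul, skewTransvection_smul, wedge_smul_smul, smul_add,
    smul_comm g]

lemma exists_eq_skewTransvection {g : SL(2, F)} {v : Fin 2 → F} (hv : v ≠ 0) (hg : g • v = v) :
    ∃ t, g = skewTransvection v t := by
  obtain ⟨w, hw⟩ := exists_wedge_ne_zero hv
  have hdiff : wedge v (g • w + (-1 : F) • w) = 0 := by
    rw [wedge_add_right, wedge_smul_right]
    nth_rw 1 [← hg]
    rw [wedge_smul_smul]; ring
  obtain ⟨c, hc⟩ := exists_eq_smul_of_wedge_eq_zero hv hdiff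
  refine ⟨c / wedge v w, eq_of_smul_eq_of_wedge_ne_zero hw ?_ ?_⟩
  · rw [hg, skewTransvection_smul_self]
  · rw [skewTransvection_smul, div_mul_cancel₀ _ hw, ← hc, neg_one_smul,
      add_add_neg_cancel'_right]

lemma exists_eq_skewTransvection_of_ne_one {g : SL(2, F)} {v : Fin 2 → F} (hg1 : g ≠ 1)
    (hv : v ≠ 0) (hg : g • v = v) : ∃ t, t ≠ 0 ∧ g = skewTransvection v t := by
  obtain ⟨t, rfl⟩ := exists_eq_skewTransvection hv hg
  refine ⟨t, ?_, rfl⟩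
  rintro rfl
  exact hg1 (skewTransvection_zero v)

lemma eq_or_eq_neg_of_skewTransvection_eq {v w : Fin 2 → F} {t : F} (ht : t ≠ 0)
    (h : skewTransvection v t = skewTransvection w t) : w = v ∨ w = -v := by
  have h₀₀ : v 0 ^ 2 = w 0 ^ 2 := mul_left_cancel₀ ht (congrArg (fun g : SL(2, F) => g 0 1) h)
  have h₁₁ : v 1 ^ 2 = w 1 ^ 2 :=
    mul_left_cancel₀ ht (neg_injective (congrArg (fun g : SL(2, F) => g 1 0) h))
  have h₀₁ : v 0 * v 1 = w 0 * w 1 := by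
    refine mul_left_cancel₀ ht ?_
    rw [← mul_assoc, ← mul_assoc]
    exact add_left_cancel (congrArg (fun g : SL(2, F) => g 1 1) h)
  simp only [funext_iff, Fin.forall_fin_two, Pi.neg_apply]
  grind

lemma skewTransvection_smul_eq_iff {v : Fin 2 → F} {t : F} (hv : v ≠ 0) (ht : t ≠ 0)
    (x : Fin 2 → F) : skewTransvection v t • x = x ↔ wedge v x = 0 := by
  rw [skewTransvection_smul, add_eq_left, smul_eq_zero_iff_left hv, mul_eq_zero_iff_left ht]

lemma skewTransvection_ne_one {v : Fin 2 → F} {t : F} (hv : v ≠ 0) (ht : t ≠ 0) :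
    skewTransvection v t ≠ 1 := by
  intro h
  obtain ⟨w, hw⟩ := exists_wedge_ne_zero hv
  exact hw ((skewTransvection_smul_eq_iff hv ht w).1 (by rw [h, one_smul]))

/-- The trace of an element of `SL₂`. -/
def sl2Trace (g : SL(2, F)) : F := g 0 0 + g 1 1

lemma sl2Trace_mul (g h : SL(2, F)) : sl2Trace (g * h) =
    g 0 0 * h 0 0 + g 0 1 * h 1 0 + (g 1 0 * h 0 1 + g 1 1 * h 1 1) := by
  rw [sl2Trace, sl2_mul_apply, sl2_mul_apply]

lemma sl2Trace_mul_comm (g h : SL(2, F)) : sl2Trace (g * h) = sl2Trace (h * g) := by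
  rw [sl2Trace_mul, sl2Trace_mul]; ring

lemma sl2Trace_mul_skewTransvection (g : SL(2, F)) (v : Fin 2 → F) (t : F) :
    sl2Trace (g * skewTransvection v t) = sl2Trace g + t * wedge v (g • v) := by
  rw [sl2Trace_mul, sl2Trace, coe_skewTransvection, wedge, sl2_smul_zero_apply,
    sl2_smul_one_apply]
  simp only [of_apply, cons_val', cons_val_zero, cons_val_one, cons_val_fin_one]
  ring

lemma exists_fixed_vector_iff_sl2Trace_eq_two (g : SL(2, F)) :
    (∃ v : Fin 2 → F, v ≠ 0 ∧ g • v = v) ↔ sl2Trace g = 2 := by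
  have hdet : ((g : Matrix (Fin 2) (Fin 2) F) - 1).det = 2 - sl2Trace g := by
    rw [det_fin_two, sl2Trace]
    simp only [Matrix.sub_apply, one_apply_eq, one_apply_ne zero_ne_one, one_apply_ne one_ne_zero]
    linear_combination sl2_det_eq g
  rw [eq_comm (b := (2 : F)), ← sub_eq_zero, ← hdet, ← exists_mulVec_eq_zero_iff]
  refine exists_congr fun v => and_congr_right fun _ => ?_
  rw [sub_mulVec, one_mulVec, sub_eq_zero]
  exact Iff.rfl

end SpecialLinear

section Unipotents

variable {F : Type*} [Field F] [Fintype F] [DecidableEq F]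

/-- The elements of `SL₂` other than `1` that fix a nonzero vector, encoded by their trace. -/
def nontrivialUnipotents (F : Type*) [Field F] [Fintype F] [DecidableEq F] : Finset SL(2, F) :=
  {g | g ≠ 1 ∧ sl2Trace g = 2}

lemma mem_nontrivialUnipotents {g : SL(2, F)} :
    g ∈ nontrivialUnipotents F ↔ g ≠ 1 ∧ sl2Trace g = 2 := by
  rw [nontrivialUnipotents, mem_filter_univ]

lemma mem_nontrivialUnipotents_iff_exists {g : SL(2, F)} :
    g ∈ nontrivialUnipotents F ↔ g ≠ 1 ∧ ∃ v : Fin 2 → F, v ≠ 0 ∧ g • v = v := by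
  rw [mem_nontrivialUnipotents, exists_fixed_vector_iff_sl2Trace_eq_two]

lemma skewTransvection_mem_nontrivialUnipotents {v : Fin 2 → F} {t : F} (hv : v ≠ 0)
    (ht : t ≠ 0) : skewTransvection v t ∈ nontrivialUnipotents F :=
  mem_nontrivialUnipotents_iff_exists.2
    ⟨skewTransvection_ne_one hv ht, v, hv, skewTransvection_smul_self v t⟩

lemma exists_eq_skewTransvection_of_mem {g : SL(2, F)} (hg : g ∈ nontrivialUnipotents F) :
    ∃ v t, v ≠ 0 ∧ t ≠ 0 ∧ g = skewTransvection v t := by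
  obtain ⟨hg1, v, hv, hgv⟩ := mem_nontrivialUnipotents_iff_exists.1 hg
  obtain ⟨t, ht, rfl⟩ := exists_eq_skewTransvection_of_ne_one hg1 hv hgv
  exact ⟨v, t, hv, ht, rfl⟩

lemma smul_eq_of_sl2Trace_mul_eq_two {g h : SL(2, F)} (hg : g ∈ nontrivialUnipotents F)
    (hh : h ≠ 1) (hgh : sl2Trace (g * h) = 2) {v : Fin 2 → F} (hv : v ≠ 0) (hhv : h • v = v) :
    g • v = v := by
  obtain ⟨w, t, hw, ht, rfl⟩ := exists_eq_skewTransvection_of_mem hg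
  obtain ⟨s, hs, rfl⟩ := exists_eq_skewTransvection_of_ne_one hh hv hhv
  have htrace : sl2Trace (skewTransvection w t) = 2 := (mem_nontrivialUnipotents.1 hg).2
  rw [sl2Trace_mul_skewTransvection, htrace, add_eq_left, skewTransvection_smul, wedge_add_right,
    wedge_self, zero_add, wedge_smul_right, wedge_swap w v] at hgh
  rw [skewTransvection_smul_eq_iff hw ht]
  simpa [hs, ht] using hgh

lemma exists_direction_skewTransvection {g : SL(2, F)} (hg : g ∈ nontrivialUnipotents F) :
    (∃ t, g = skewTransvection ![1, 0] t) ∨ ∃ x t, g = skewTransvection ![x, 1] t := by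
  obtain ⟨v, t, -, -, rfl⟩ := exists_eq_skewTransvection_of_mem hg
  by_cases h1 : v 1 = 0
  · have hvec : v = v 0 • ![1, 0] := by ext i; fin_cases i <;> simp [h1]
    exact Or.inl ⟨_, by rw [hvec, skewTransvection_smul_left]⟩
  · have hvec : v = v 1 • ![v 0 / v 1, 1] := by
      ext i; fin_cases i <;> simp [mul_div_cancel₀, h1]
    exact Or.inr ⟨v 0 / v 1, _, by rw [hvec, skewTransvection_smul_left, ← hvec]⟩

end Unipotents

section Fibres

variable {F : Type*} [Field F]

open Polynomial in
lemma card_quadratic_roots_le_two [Fintype F] [DecidableEq F] {a b c : F}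
    (h : a ≠ 0 ∨ b ≠ 0 ∨ c ≠ 0) : #{x : F | a * x ^ 2 + b * x + c = 0} ≤ 2 := by
  set P : F[X] := C a * X ^ 2 + C b * X + C c with hP
  have hP0 : P ≠ 0 := by
    intro h0
    have ha : P.coeff 2 = a := by simp [hP]
    have hb : P.coeff 1 = b := by simp [hP]
    have hc : P.coeff 0 = c := by simp [hP]
    simp only [h0, coeff_zero] at ha hb hc
    grind
  calc #{x : F | a * x ^ 2 + b * x + c = 0} ≤ #P.roots.toFinset := by
        refine card_le_card fun x hx => ?_
        rw [Multiset.mem_toFinset, mem_roots hP0, IsRoot.def]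
        simpa [hP] using hx
    _ ≤ P.roots.card := P.roots.toFinset_card_le
    _ ≤ 2 := P.card_roots'.trans natDegree_quadratic_le

/-- Where `g - 1` and `h - 1` are proportional modulo scalars, the determinant condition forces the
factor of proportionality to be `1`. -/
lemma eq_of_proportional_of_sl2Trace_ne_two (h2 : (2 : F) ≠ 0) {g h : SL(2, F)}
    (hg : sl2Trace g ≠ 2) (hh : sl2Trace h ≠ 2)
    (h10 : (sl2Trace h - 2) * g 1 0 = (sl2Trace g - 2) * h 1 0)
    (h01 : (sl2Trace h - 2) * g 0 1 = (sl2Trace g - 2) * h 0 1)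
    (hdiag : (sl2Trace h - 2) * (g 1 1 - g 0 0) = (sl2Trace g - 2) * (h 1 1 - h 0 0)) :
    g = h := by
  have hg0 := sub_ne_zero.2 hg
  have hh0 := sub_ne_zero.2 hh
  have discriminant (k : SL(2, F)) : (k 1 1 - k 0 0) ^ 2 + 4 * (k 0 1 * k 1 0) =
      (sl2Trace k - 2) * (sl2Trace k - 2 + 4) := by
    rw [sl2Trace]; linear_combination (-4) * sl2_det_eq k
  have htrace : sl2Trace h - 2 = sl2Trace g - 2 := by
    set σ := sl2Trace g - 2
    set τ := sl2Trace h - 2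
    have hprod : (σ * τ * 2 * 2) * (τ - σ) = 0 := by
      linear_combination (-τ ^ 2) * discriminant g + σ ^ 2 * discriminant h
        + (τ * (g 1 1 - g 0 0) + σ * (h 1 1 - h 0 0)) * hdiag + 4 * (τ * g 1 0) * h01
        + 4 * (σ * h 0 1) * h10
    exact sub_eq_zero.1 ((mul_eq_zero.1 hprod).resolve_left (by simp [hg0, hh0, h2]))
  rw [htrace] at h10 h01 hdiag
  have hdiag' := mul_left_cancel₀ hg0 hdiag
  rw [sl2Trace, sl2Trace] at htrace
  refine sl2_ext (mul_left_cancel₀ h2 ?_) (mul_left_cancel₀ hg0 h01) (mul_left_cancel₀ hg0 h10)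
    (mul_left_cancel₀ h2 ?_)
  · linear_combination -htrace - hdiag'
  · linear_combination hdiag' - htrace

lemma wedge_smul_affine (g : SL(2, F)) (x : F) :
    wedge ![x, 1] (g • ![x, 1]) = g 1 0 * x ^ 2 + (g 1 1 - g 0 0) * x - g 0 1 := by
  rw [wedge, sl2_smul_zero_apply, sl2_smul_one_apply]
  simp only [cons_val_zero, cons_val_one]
  ring

variable [Fintype F] [DecidableEq F]

lemma card_directions_le_two (h2 : (2 : F) ≠ 0) {g h : SL(2, F)}
    (hg : sl2Trace g ≠ 2) (hh : sl2Trace h ≠ 2) (hgh : g ≠ h) :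
    #{x : F | (sl2Trace h - 2) * wedge ![x, 1] (g • ![x, 1]) =
      (sl2Trace g - 2) * wedge ![x, 1] (h • ![x, 1])} ≤ 2 := by
  set σ := sl2Trace g - 2
  set τ := sl2Trace h - 2
  have hcoeff : τ * g 1 0 - σ * h 1 0 ≠ 0 ∨ τ * (g 1 1 - g 0 0) - σ * (h 1 1 - h 0 0) ≠ 0 ∨
      -(τ * g 0 1 - σ * h 0 1) ≠ 0 := by
    by_contra! hzero
    obtain ⟨h10, hdiag, h01⟩ := hzero
    exact hgh (eq_of_proportional_of_sl2Trace_ne_two h2 hg hh (sub_eq_zero.1 h10)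
      (sub_eq_zero.1 (neg_eq_zero.1 h01)) (sub_eq_zero.1 hdiag))
  refine (card_le_card fun x hx => ?_).trans (card_quadratic_roots_le_two hcoeff)
  rw [mem_filter_univ, wedge_smul_affine, wedge_smul_affine] at hx
  rw [mem_filter_univ]
  linear_combination hx

/-- A unipotent `n` in direction `v` with `sl2Trace (g * n⁻¹) = 2` is determined by `v`. Having
this for both `g` and `h` confines `v` to the zeros of a nonzero binary quadratic form. -/
lemma card_common_unipotent_divisors_le (h2 : (2 : F) ≠ 0) {g h : SL(2, F)}
    (hg : sl2Trace g ≠ 2) (hh : sl2Trace h ≠ 2) (hgh : g ≠ h) :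
    #{n ∈ nontrivialUnipotents F | sl2Trace (g * n⁻¹) = 2 ∧ sl2Trace (h * n⁻¹) = 2} ≤ 3 := by
  set X : Finset F := {x : F | (sl2Trace h - 2) * wedge ![x, 1] (g • ![x, 1]) =
      (sl2Trace g - 2) * wedge ![x, 1] (h • ![x, 1])} with hX
  set directions : Finset (Fin 2 → F) := insert ![1, 0] (X.image fun x => ![x, 1])
  have hdirections : #directions ≤ 3 :=
    (card_insert_le _ _).trans
      (Nat.succ_le_succ (card_image_le.trans (card_directions_le_two h2 hg hh hgh)))
  have htrace (k : SL(2, F)) (v : Fin 2 → F) (t : F)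
      (hk : sl2Trace (k * (skewTransvection v t)⁻¹) = 2) :
      t * wedge v (k • v) = sl2Trace k - 2 := by
    rw [skewTransvection_inv, sl2Trace_mul_skewTransvection] at hk
    linear_combination -hk
  have hdetermined (v : Fin 2 → F) (t : F)
      (hk : sl2Trace (g * (skewTransvection v t)⁻¹) = 2) :
      t = (sl2Trace g - 2) / wedge v (g • v) := by
    rw [← htrace g v t hk, mul_div_cancel_right₀]
    intro h0
    exact sub_ne_zero.2 hg (by rw [← htrace g v t hk, h0, mul_zero])
  refine (card_le_card (t := directions.image fun v =>
    skewTransvection v ((sl2Trace g - 2) / wedge v (g • v))) fun n hn => ?_).trans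
    (card_image_le.trans hdirections)
  obtain ⟨hn, hgn, hhn⟩ := mem_filter.1 hn
  obtain ⟨t, rfl⟩ | ⟨x, t, rfl⟩ := exists_direction_skewTransvection hn
  · exact mem_image.2 ⟨![1, 0], mem_insert_self _ _, by rw [← hdetermined _ t hgn]⟩
  · refine mem_image.2 ⟨![x, 1], mem_insert_of_mem (mem_image_of_mem _ ?_), by
      rw [← hdetermined _ t hgn]⟩
    rw [hX, mem_filter_univ, ← htrace g _ t hgn, ← htrace h _ t hhn]
    ring

end Fibres

/-! ### Growth from unipotents -/

section TransverseTriples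

variable {F : Type*} [Field F] [DecidableEq F]

/-- The triples `(n, m, k)` in `W` for which neither `m * n` nor `n * k` has trace `2`. -/
def transverseTriples (W : Finset SL(2, F)) : Finset (SL(2, F) × SL(2, F) × SL(2, F)) :=
  {q ∈ W ×ˢ W ×ˢ W | sl2Trace (q.2.1 * q.1) ≠ 2 ∧ sl2Trace (q.1 * q.2.2) ≠ 2}

lemma mem_transverseTriples {W : Finset SL(2, F)} {n m k : SL(2, F)} :
    (n, m, k) ∈ transverseTriples W ↔
      (n ∈ W ∧ m ∈ W ∧ k ∈ W) ∧ sl2Trace (m * n) ≠ 2 ∧ sl2Trace (n * k) ≠ 2 := by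
  simp only [transverseTriples, mem_filter, mem_product]

lemma card_pow_three_le_four_mul_card_transverseTriples {W : Finset SL(2, F)}
    (h : ∀ n ∈ W, 2 * #{m ∈ W | sl2Trace (m * n) = 2} ≤ #W) :
    #W ^ 3 ≤ 4 * #(transverseTriples W) := by
  set partners : SL(2, F) → Finset SL(2, F) := fun n => {m ∈ W | sl2Trace (m * n) ≠ 2}
  have hpartners (n) (hn : n ∈ W) : #W ≤ 2 * #(partners n) := by
    have := card_filter_add_card_filter_not (s := W) fun m => sl2Trace (m * n) = 2
    have := h n hn
    grind
  have hfibre (n) (hn : n ∈ W) :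
      #(partners n ×ˢ partners n) ≤ #{q ∈ transverseTriples W | q.1 = n} := by
    refine card_le_card_of_injOn (fun r => (n, r)) ?_ (Prod.mk_right_injective n).injOn
    rintro ⟨m, k⟩ hmk
    simp only [partners, mem_coe, mem_product, mem_filter, mem_transverseTriples] at hmk ⊢
    rw [sl2Trace_mul_comm n k]
    tauto
  calc #W ^ 3 = ∑ _n ∈ W, #W * #W := by rw [sum_const, smul_eq_mul]; ring
    _ ≤ ∑ n ∈ W, 4 * #{q ∈ transverseTriples W | q.1 = n} := by
        refine sum_le_sum fun n hn => ?_
        have := hfibre n hn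
        rw [card_product] at this
        nlinarith [hpartners n hn]
    _ = 4 * #(transverseTriples W) := by
        rw [← mul_sum, ← card_eq_sum_card_fiberwise]
        rintro ⟨n, m, k⟩ hq
        exact (mem_transverseTriples.1 hq).1.1

lemma card_commuting_transverseTriples_le (W : Finset SL(2, F)) :
    #{q ∈ transverseTriples W | q.2.1 * q.1 = q.1 * q.2.2} ≤ #W ^ 2 := by
  rw [sq, ← card_product]
  refine card_le_card_of_injOn (fun q => (q.1, q.2.1)) ?_ ?_
  · rintro ⟨n, m, k⟩ hq
    have := mem_transverseTriples.1 (mem_filter.1 hq).1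
    exact mem_product.2 ⟨this.1.1, this.1.2.1⟩
  · rintro ⟨n, m, k⟩ hq ⟨n', m', k'⟩ hq' heq
    obtain ⟨rfl, rfl⟩ := Prod.mk.inj heq
    have hk : m * n = n * k := (mem_filter.1 hq).2
    have hk' : m * n = n * k' := (mem_filter.1 hq').2
    rw [mul_left_cancel (hk.symm.trans hk')]

variable [Fintype F]

lemma card_transverseTriples_fibre_le (h2 : (2 : F) ≠ 0) {W : Finset SL(2, F)}
    (hW : W ⊆ nontrivialUnipotents F) {g h : SL(2, F)} (hgh : g ≠ h) :
    #{q ∈ transverseTriples W | (q.2.1 * q.1, q.1 * q.2.2) = (g, h)} ≤ 3 := by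
  set Q := {q ∈ transverseTriples W | (q.2.1 * q.1, q.1 * q.2.2) = (g, h)}
  have hQ {n m k : SL(2, F)} (hq : (n, m, k) ∈ Q) :
      ((n, m, k) ∈ transverseTriples W) ∧ m * n = g ∧ n * k = h :=
    ⟨(mem_filter.1 hq).1, Prod.mk.inj (mem_filter.1 hq).2⟩
  obtain hempty | ⟨⟨n, m, k⟩, hq⟩ := Q.eq_empty_or_nonempty
  · rw [hempty, card_empty]; exact Nat.zero_le 3
  obtain ⟨hmem, rfl, rfl⟩ := hQ hq
  have htransverse := (mem_transverseTriples.1 hmem).2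
  refine le_trans ?_ (card_common_unipotent_divisors_le h2 htransverse.1 htransverse.2 hgh)
  refine card_le_card_of_injOn Prod.fst ?_ ?_
  · rintro ⟨n', m', k'⟩ hq'
    obtain ⟨hmem', hm', hk'⟩ := hQ hq'
    obtain ⟨⟨hn'W, hm'W, hk'W⟩, -⟩ := mem_transverseTriples.1 hmem'
    refine mem_filter.2 ⟨hW hn'W, ?_, ?_⟩
    · rw [← hm', mul_inv_cancel_right]
      exact (mem_nontrivialUnipotents.1 (hW hm'W)).2
    · rw [← hk', sl2Trace_mul_comm, inv_mul_cancel_left]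
      exact (mem_nontrivialUnipotents.1 (hW hk'W)).2
  · rintro ⟨n₁, m₁, k₁⟩ hq₁ ⟨n₂, m₂, k₂⟩ hq₂ (rfl : n₁ = n₂)
    obtain ⟨-, hm₁, hk₁⟩ := hQ hq₁
    obtain ⟨-, hm₂, hk₂⟩ := hQ hq₂
    rw [mul_right_cancel (hm₁.trans hm₂.symm), mul_left_cancel (hk₁.trans hk₂.symm)]

lemma card_pow_three_le_of_transverse (h2 : (2 : F) ≠ 0) {W : Finset SL(2, F)}
    (hW : W ⊆ nontrivialUnipotents F)
    (h : ∀ n ∈ W, 2 * #{m ∈ W | sl2Trace (m * n) = 2} ≤ #W) :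
    #W ^ 3 ≤ 16 * #(W * W) ^ 2 := by
  obtain rfl | hne := W.eq_empty_or_nonempty
  · rw [card_empty]; positivity
  have hmul : #W ≤ #(W * W) := card_le_card_mul_left hne
  have hcommuting := card_commuting_transverseTriples_le W
  have hgeneric : #{q ∈ transverseTriples W | ¬q.2.1 * q.1 = q.1 * q.2.2} ≤
      3 * #((W * W) ×ˢ (W * W)) := by
    refine card_le_mul_card_image_of_maps_to
      (f := fun q => (q.2.1 * q.1, q.1 * q.2.2)) ?_ 3 ?_
    · rintro ⟨n, m, k⟩ hq
      obtain ⟨⟨hn, hm, hk⟩, -⟩ := mem_transverseTriples.1 (mem_filter.1 hq).1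
      exact mem_product.2 ⟨mul_mem_mul hm hn, mul_mem_mul hn hk⟩
    · rintro ⟨g, g'⟩ -
      by_cases hgg' : g = g'
      · refine (card_eq_zero.2 (filter_eq_empty_iff.2 fun q hq heq => ?_)).trans_le (Nat.zero_le 3)
        obtain ⟨hg, hg'⟩ := Prod.mk.inj heq
        exact (mem_filter.1 hq).2 (hg.trans (hgg'.trans hg'.symm))
      · exact (card_le_card (filter_subset_filter _ (filter_subset _ _))).trans
          (card_transverseTriples_fibre_le h2 hW hgg')
  have hsplit := card_filter_add_card_filter_not (s := transverseTriples W)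
    fun q => q.2.1 * q.1 = q.1 * q.2.2
  have hcount := card_pow_three_le_four_mul_card_transverseTriples h
  rw [card_product] at hgeneric
  nlinarith

end TransverseTriples

section Fixers

variable {G X : Type*} [Group G] [MulAction G X] [DecidableEq X]

/-- The elements of `T` fixing the point `x`. -/
def fixers (T : Finset G) (x : X) : Finset G := {g ∈ T | g • x = x}

lemma mem_fixers {T : Finset G} {x : X} {g : G} : g ∈ fixers T x ↔ g ∈ T ∧ g • x = x := by
  rw [fixers, mem_filter]

lemma card_le_card_fixers_mul_card_image [DecidableEq G] (S : Finset G) (x : X) :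
    #S ≤ #(fixers (S⁻¹ * S) x) * #(S.image (· • x)) := by
  refine card_le_mul_card_image _ _ fun y hy => ?_
  obtain ⟨s₀, hs₀, rfl⟩ := mem_image.1 hy
  refine card_le_card_of_injOn (s₀⁻¹ * ·) (fun s hs => ?_) (mul_right_injective _).injOn
  obtain ⟨hs, hsx⟩ := mem_filter.1 hs
  refine mem_fixers.2 ⟨mul_mem_mul (inv_mem_inv hs₀) hs, ?_⟩
  rw [mul_smul, hsx, inv_smul_smul]

end Fixers

section Pivot

variable {F : Type*} [Field F]

lemma wedge_smul_ne_zero_of_fixes {g : SL(2, F)} {v w : Fin 2 → F} (hg : g ≠ 1)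
    (hgw : g • w = w) (hwv : wedge w v ≠ 0) : wedge v (g • v) ≠ 0 := by
  have hw : w ≠ 0 := by rintro rfl; simp [wedge] at hwv
  obtain ⟨t, ht, rfl⟩ := exists_eq_skewTransvection_of_ne_one hg hw hgw
  rw [skewTransvection_smul, wedge_add_right, wedge_self, zero_add, wedge_smul_right,
    wedge_swap w v]
  exact mul_ne_zero (mul_ne_zero ht hwv) (neg_ne_zero.2 hwv)

variable [DecidableEq F]

/-- The map `(x, y) ↦ x * n * y` is injective on pairs of elements fixing `v`, since an element
fixing both `v` and `n • v` is trivial. -/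
lemma card_fixers_sq_le {T : Finset SL(2, F)} {n : SL(2, F)} {v : Fin 2 → F}
    (hn : wedge v (n • v) ≠ 0) : #(fixers T v) ^ 2 ≤ #(T * {n} * T) := by
  rw [sq, ← card_product]
  refine card_le_card_of_injOn (fun q => q.1 * n * q.2) ?_ ?_
  · rintro ⟨x, y⟩ hq
    obtain ⟨hx, hy⟩ := mem_product.1 hq
    exact mul_mem_mul (mul_mem_mul (mem_fixers.1 hx).1 (mem_singleton_self n)) (mem_fixers.1 hy).1
  · rintro ⟨x, y⟩ hq ⟨x', y'⟩ hq' (heq : x * n * y = x' * n * y')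
    simp only [mem_coe, mem_product, mem_fixers] at hq hq'
    obtain ⟨⟨-, hx⟩, -, hy⟩ := hq
    obtain ⟨⟨-, hx'⟩, -, hy'⟩ := hq'
    have hxn : x • n • v = x' • n • v := by
      calc x • n • v = (x * n * y) • v := by rw [mul_smul, mul_smul, hy]
        _ = x' • n • v := by rw [heq, mul_smul, mul_smul, hy']
    obtain rfl := eq_of_smul_eq_of_wedge_ne_zero hn (hx.trans hx'.symm) hxn
    rw [mul_left_cancel heq]

/-- The vector `v` is nonzero and fixed by some nontrivial element of `S ^ 4`. -/
def HasFixer (S : Finset SL(2, F)) (v : Fin 2 → F) : Prop :=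
  v ≠ 0 ∧ ∃ g ∈ S ^ 4, g ≠ 1 ∧ g • v = v

variable {S : Finset SL(2, F)}

lemma card_fixers_pow_eight_sq_le {v w x : Fin 2 → F} (hv : HasFixer S v) (hw : HasFixer S w)
    (hvw : wedge v w ≠ 0) (hx : x ≠ 0) : #(fixers (S ^ 8) x) ^ 2 ≤ #(S ^ 20) := by
  obtain ⟨g, hgS, hg⟩ : ∃ g ∈ S ^ 4, wedge x (g • x) ≠ 0 := by
    obtain ⟨hv0, g, hgS, hg1, hgv⟩ := hv
    obtain ⟨-, h, hhS, hh1, hhw⟩ := hw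
    by_cases hvx : wedge v x = 0
    · obtain ⟨c, rfl⟩ := exists_eq_smul_of_wedge_eq_zero hv0 hvx
      refine ⟨h, hhS, wedge_smul_ne_zero_of_fixes hh1 hhw ?_⟩
      rw [wedge_smul_right, wedge_swap v w]
      exact mul_ne_zero (left_ne_zero_of_smul hx) (neg_ne_zero.2 hvw)
    · exact ⟨g, hgS, wedge_smul_ne_zero_of_fixes hg1 hgv hvx⟩
  refine (card_fixers_sq_le hg).trans (card_le_card ?_)
  calc S ^ 8 * {g} * S ^ 8 ⊆ S ^ 8 * S ^ 4 * S ^ 8 := by gcongr; exact singleton_subset_iff.2 hgS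
    _ = S ^ 20 := by rw [← pow_add, ← pow_add]

lemma HasFixer.smul_of_ne_zero {v : Fin 2 → F} (hv : HasFixer S v) {c : F} (hc : c ≠ 0) :
    HasFixer S (c • v) := by
  obtain ⟨hv0, g, hg, hg1, hgv⟩ := hv
  exact ⟨smul_ne_zero hc hv0, g, hg, hg1, by rw [smul_comm, hgv]⟩

variable [Fintype F]

lemma card_unipotents_pow_three_le (h2 : (2 : F) ≠ 0) (h1 : 1 ∈ S) {v w : Fin 2 → F}
    (hv : HasFixer S v) (hw : HasFixer S w) (hvw : wedge v w ≠ 0) :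
    #(S ^ 8 ∩ nontrivialUnipotents F) ^ 3 ≤ 16 * #(S ^ 20) ^ 2 := by
  set W := S ^ 8 ∩ nontrivialUnipotents F
  by_cases h : ∀ n ∈ W, 2 * #{m ∈ W | sl2Trace (m * n) = 2} ≤ #W
  · have hmul : W * W ⊆ S ^ 20 := calc
      W * W ⊆ S ^ 8 * S ^ 8 := mul_subset_mul inter_subset_left inter_subset_left
      _ = S ^ 16 := (pow_add S 8 8).symm
      _ ⊆ S ^ 20 := pow_subset_pow_right h1 (by norm_num)
    calc #W ^ 3 ≤ 16 * #(W * W) ^ 2 := card_pow_three_le_of_transverse h2 inter_subset_right h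
      _ ≤ 16 * #(S ^ 20) ^ 2 := by gcongr
  · push Not at h
    obtain ⟨n, hn, hlt⟩ := h
    obtain ⟨hn1, x, hx, hnx⟩ := mem_nontrivialUnipotents_iff_exists.1 (mem_inter.1 hn).2
    have hparallel : {m ∈ W | sl2Trace (m * n) = 2} ⊆ fixers (S ^ 8) x := fun m hm => by
      obtain ⟨hmW, hmn⟩ := mem_filter.1 hm
      obtain ⟨hmS, hmV⟩ := mem_inter.1 hmW
      exact mem_fixers.2 ⟨hmS, smul_eq_of_sl2Trace_mul_eq_two hmV hn1 hmn hx hnx⟩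
    have hcard := card_le_card hparallel
    set r := #(fixers (S ^ 8) x)
    calc #W ^ 3 ≤ (2 * r) ^ 3 := by gcongr; omega
      _ = 8 * r ^ 3 := by ring
      _ ≤ 16 * (r ^ 2) ^ 2 := by
        obtain h0 | h0 := Nat.eq_zero_or_pos r
        · simp [h0]
        · nlinarith [pow_pos h0 3]
      _ ≤ 16 * #(S ^ 20) ^ 2 := by gcongr; exact card_fixers_pow_eight_sq_le hv hw hvw hx

lemma card_image_smul_le_two_mul_card_unipotents (hS : S⁻¹ = S) {g : SL(2, F)} {v : Fin 2 → F}
    (hg : g ∈ S ^ 6) (hg1 : g ≠ 1) (hv : v ≠ 0) (hgv : g • v = v) :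
    #(S.image (· • v)) ≤ 2 * #(S ^ 8 ∩ nontrivialUnipotents F) := by
  obtain ⟨t, ht, rfl⟩ := exists_eq_skewTransvection_of_ne_one hg1 hv hgv
  refine card_le_mul_card_image_of_maps_to (f := fun x => skewTransvection x t) ?_ 2 ?_
  · intro x hx
    obtain ⟨s, hs, rfl⟩ := mem_image.1 hx
    refine mem_inter.2 ⟨?_, skewTransvection_mem_nontrivialUnipotents
      ((smul_ne_zero_iff_ne s).2 hv) ht⟩
    rw [← conj_skewTransvection, show S ^ 8 = S * S ^ 6 * S by rw [← pow_succ', ← pow_succ]]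
    exact mul_mem_mul (mul_mem_mul hs hg) (hS ▸ inv_mem_inv hs)
  · intro n _
    obtain hempty | ⟨x, hx⟩ := {x ∈ S.image (· • v) | skewTransvection x t = n}.eq_empty_or_nonempty
    · rw [hempty, card_empty]; exact Nat.zero_le 2
    · refine (card_le_card (t := {x, -x}) fun y hy => ?_).trans card_le_two
      rw [mem_insert, mem_singleton]
      exact eq_or_eq_neg_of_skewTransvection_eq ht
        ((mem_filter.1 hx).2.trans (mem_filter.1 hy).2.symm)

lemma card_le_two_mul_card_unipotents_mul_card_fixers (hS : S⁻¹ = S) {g : SL(2, F)}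
    {v : Fin 2 → F} (hg : g ∈ S ^ 6) (hg1 : g ≠ 1) (hv : v ≠ 0) (hgv : g • v = v) :
    #S ≤ 2 * #(S ^ 8 ∩ nontrivialUnipotents F) * #(fixers (S ^ 2) v) := by
  have horbit := card_le_card_fixers_mul_card_image S v
  rw [hS, ← sq] at horbit
  rw [mul_comm]
  exact horbit.trans
    (Nat.mul_le_mul_left _ (card_image_smul_le_two_mul_card_unipotents hS hg hg1 hv hgv))

lemma HasFixer.smul_mem (hS : S⁻¹ = S) (h1 : 1 ∈ S)
    (hlt : 2 * #(S ^ 8 ∩ nontrivialUnipotents F) < #S) {v : Fin 2 → F} (hv : HasFixer S v)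
    {s : SL(2, F)} (hs : s ∈ S) : HasFixer S (s • v) := by
  obtain ⟨hv0, g, hg, hg1, hgv⟩ := hv
  have hsv0 : s • v ≠ 0 := (smul_ne_zero_iff_ne s).2 hv0
  have hmem : s * g * s⁻¹ ∈ S ^ 6 := by
    rw [show S ^ 6 = S * S ^ 4 * S by rw [← pow_succ', ← pow_succ]]
    exact mul_mem_mul (mul_mem_mul hs hg) (hS ▸ inv_mem_inv hs)
  have hfix : (s * g * s⁻¹) • s • v = s • v := by
    rw [mul_smul, inv_smul_smul, mul_smul, hgv]
  have hcard := card_le_two_mul_card_unipotents_mul_card_fixers hS hmem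
    (mt conj_eq_one_iff.1 hg1) hsv0 hfix
  obtain ⟨h, hh, hh1⟩ : ∃ h ∈ fixers (S ^ 2) (s • v), h ≠ 1 :=
    exists_mem_ne (by by_contra! hle; nlinarith) 1
  obtain ⟨hhS, hhv⟩ := mem_fixers.1 hh
  exact ⟨hsv0, h, pow_subset_pow_right h1 (by norm_num) hhS, hh1, hhv⟩

lemma HasFixer.pow_smul_mem (hS : S⁻¹ = S) (h1 : 1 ∈ S)
    (hlt : 2 * #(S ^ 8 ∩ nontrivialUnipotents F) < #S) {v : Fin 2 → F} (hv : HasFixer S v)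
    {n : ℕ} {s : SL(2, F)} (hs : s ∈ S ^ n) : HasFixer S (s • v) := by
  induction n generalizing s with
  | zero =>
    rw [pow_zero, mem_one] at hs
    rwa [hs, one_smul]
  | succ n ih =>
    rw [pow_succ'] at hs
    obtain ⟨a, ha, b, hb, rfl⟩ := mem_mul.1 hs
    rw [mul_smul]
    exact (ih hb).smul_mem hS h1 hlt ha

end Pivot

section PrimeField

variable {p : ℕ} [Fact p.Prime] {S : Finset SL(2, ZMod p)}

/-- Powers of a transvection fixing `w` move `v` to every point of the line `v + F_p w`. -/
lemma HasFixer.of_ne_zero (hS : S⁻¹ = S) (h1 : 1 ∈ S)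
    (hlt : 2 * #(S ^ 8 ∩ nontrivialUnipotents (ZMod p)) < #S) {v w : Fin 2 → ZMod p}
    (hv : HasFixer S v) (hw : HasFixer S w) (hvw : wedge v w ≠ 0) {x : Fin 2 → ZMod p}
    (hx : x ≠ 0) : HasFixer S x := by
  obtain ⟨a, b, rfl⟩ := exists_eq_smul_add_smul_of_wedge_ne_zero hvw x
  by_cases ha : a = 0
  · rw [ha, zero_smul, zero_add] at hx ⊢
    exact hw.smul_of_ne_zero (left_ne_zero_of_smul hx)
  obtain ⟨hw0, g, hg, hg1, hgw⟩ := hw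
  obtain ⟨t, ht, rfl⟩ := exists_eq_skewTransvection_of_ne_one hg1 hw0 hgw
  have hwv : wedge w v ≠ 0 := by rwa [wedge_swap, neg_ne_zero]
  set n : ZMod p := b / (a * t * wedge w v) with hn
  have hpow : skewTransvection w t ^ n.val ∈ S ^ (4 * n.val) := by
    rw [pow_mul]; exact pow_mem_pow hg
  have hline : skewTransvection w t ^ n.val • v = v + (n * t * wedge w v) • w := by
    rw [skewTransvection_pow, skewTransvection_smul, ZMod.natCast_zmod_val]
  have hcoeff : a * (n * t * wedge w v) = b := by rw [hn]; field_simp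
  have := (hv.pow_smul_mem hS h1 hlt hpow).smul_of_ne_zero ha
  rwa [hline, smul_add, smul_smul, hcoeff] at this

lemma card_le_four_mul_card_unipotents_mul_card_erase_fixers (hS : S⁻¹ = S) (h1 : 1 ∈ S)
    (hlt : 2 * #(S ^ 8 ∩ nontrivialUnipotents (ZMod p)) < #S) {x : Fin 2 → ZMod p}
    (hx : HasFixer S x) :
    #S ≤ 4 * #(S ^ 8 ∩ nontrivialUnipotents (ZMod p)) * #((fixers (S ^ 2) x).erase 1) := by
  obtain ⟨hx0, g, hg, hg1, hgx⟩ := hx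
  have hcard := card_le_two_mul_card_unipotents_mul_card_fixers hS
    (pow_subset_pow_right h1 (by norm_num) hg) hg1 hx0 hgx
  have hone : 1 ∈ fixers (S ^ 2) x := mem_fixers.2 ⟨one_mem_pow h1, one_smul _ x⟩
  rw [← card_erase_add_one hone] at hcard
  obtain h0 | h0 := Nat.eq_zero_or_pos #((fixers (S ^ 2) x).erase 1)
  · rw [h0, zero_add, mul_one] at hcard
    exact absurd hcard hlt.not_ge
  · nlinarith

lemma sum_card_erase_fixers_le (h1 : 1 ∈ S) :
    ∑ x : ZMod p, #((fixers (S ^ 2) ![x, 1]).erase 1) ≤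
      #(S ^ 8 ∩ nontrivialUnipotents (ZMod p)) := by
  have hne (x : ZMod p) : ![x, 1] ≠ 0 := fun h => one_ne_zero (congrFun h 1)
  rw [← card_biUnion]
  · refine card_le_card fun g hg => ?_
    simp only [mem_biUnion, mem_univ, true_and, mem_erase, mem_fixers] at hg
    obtain ⟨x, hg1, hgS, hgx⟩ := hg
    exact mem_inter.2 ⟨pow_subset_pow_right h1 (by norm_num) hgS,
      mem_nontrivialUnipotents_iff_exists.2 ⟨hg1, _, hne x, hgx⟩⟩
  · intro x _ y _ hxy
    rw [Function.onFun, disjoint_left]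
    intro g hgx hgy
    rw [mem_erase, mem_fixers] at hgx hgy
    have hwedge : wedge ![x, 1] ![y, 1] ≠ 0 := by
      simpa [wedge] using sub_ne_zero.2 hxy
    exact hgx.1 (eq_of_smul_eq_of_wedge_ne_zero hwedge (hgx.2.2.trans (one_smul _ _).symm)
      (hgy.2.2.trans (one_smul _ _).symm))

lemma mul_card_le_four_mul_card_unipotents_sq (hS : S⁻¹ = S) (h1 : 1 ∈ S)
    (hlt : 2 * #(S ^ 8 ∩ nontrivialUnipotents (ZMod p)) < #S) {v w : Fin 2 → ZMod p}
    (hv : HasFixer S v) (hw : HasFixer S w) (hvw : wedge v w ≠ 0) :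
    p * #S ≤ 4 * #(S ^ 8 ∩ nontrivialUnipotents (ZMod p)) ^ 2 := by
  set W := S ^ 8 ∩ nontrivialUnipotents (ZMod p)
  have hne (x : ZMod p) : ![x, 1] ≠ 0 := fun h => one_ne_zero (congrFun h 1)
  calc p * #S = ∑ _x : ZMod p, #S := by rw [sum_const, card_univ, ZMod.card, smul_eq_mul]
    _ ≤ ∑ x : ZMod p, 4 * #W * #((fixers (S ^ 2) ![x, 1]).erase 1) :=
        sum_le_sum fun x _ => card_le_four_mul_card_unipotents_mul_card_erase_fixers hS h1 hlt
          (.of_ne_zero hS h1 hlt hv hw hvw (hne x))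
    _ = 4 * #W * ∑ x : ZMod p, #((fixers (S ^ 2) ![x, 1]).erase 1) := (mul_sum _ _ _).symm
    _ ≤ 4 * #W * #W := by gcongr; exact sum_card_erase_fixers_le h1
    _ = 4 * #W ^ 2 := by ring

lemma prime_pow_three_le_of_card_pow_twenty_le (hp2 : p ≠ 2) (hS : S⁻¹ = S) (h1 : 1 ∈ S) {L : ℝ}
    (hL : 1 ≤ L) (hgrowth : (#(S ^ 20) : ℝ) ≤ L * #S) (hlarge : 1024 * L ^ 2 ≤ #S)
    {v w : Fin 2 → ZMod p} (hv : HasFixer S v) (hw : HasFixer S w) (hvw : wedge v w ≠ 0) :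
    (p : ℝ) ^ 3 ≤ 16384 * L ^ 4 * #S := by
  have h2 : (2 : ZMod p) ≠ 0 :=
    Ring.two_ne_zero (by rwa [ZMod.ringChar_zmod_n])
  have hW := card_unipotents_pow_three_le h2 h1 hv hw hvw
  have hmul := mul_card_le_four_mul_card_unipotents_sq hS h1 (v := v) (w := w)
  set W := S ^ 8 ∩ nontrivialUnipotents (ZMod p)
  have hS0 : (0 : ℝ) < #S := lt_of_lt_of_le (by positivity) hlarge
  have hW3 : (#W : ℝ) ^ 3 ≤ 16 * L ^ 2 * (#S : ℝ) ^ 2 := calc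
    (#W : ℝ) ^ 3 ≤ 16 * (#(S ^ 20) : ℝ) ^ 2 := by exact_mod_cast hW
    _ ≤ 16 * (L * #S) ^ 2 := by gcongr
    _ = 16 * L ^ 2 * (#S : ℝ) ^ 2 := by ring
  have hfew : 2 * #W < #S := by
    have hfew' : (4 * #W : ℝ) ≤ #S := le_of_pow_le_pow_left₀ three_ne_zero hS0.le <| calc
      (4 * #W : ℝ) ^ 3 = 64 * (#W : ℝ) ^ 3 := by ring
      _ ≤ 1024 * L ^ 2 * (#S : ℝ) ^ 2 := by linarith
      _ ≤ #S * (#S : ℝ) ^ 2 := by gcongr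
      _ = (#S : ℝ) ^ 3 := by ring
    have : 4 * #W ≤ #S := by exact_mod_cast hfew'
    have : 0 < #S := by exact_mod_cast hS0
    omega
  have hpS : (p : ℝ) * #S ≤ 4 * (#W : ℝ) ^ 2 := by exact_mod_cast hmul hfew hv hw hvw
  refine le_of_mul_le_mul_right ?_ (pow_pos hS0 3)
  calc (p : ℝ) ^ 3 * (#S : ℝ) ^ 3 = ((p : ℝ) * #S) ^ 3 := by ring
    _ ≤ (4 * (#W : ℝ) ^ 2) ^ 3 := by gcongr
    _ = 64 * ((#W : ℝ) ^ 3) ^ 2 := by ring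
    _ ≤ 64 * (16 * L ^ 2 * (#S : ℝ) ^ 2) ^ 2 := by gcongr
    _ = 16384 * L ^ 4 * #S * (#S : ℝ) ^ 3 := by ring

end PrimeField

end MatrixGrowth

/-! ### Quasirandomness of 2-transitive actions -/

section Quasirandomness

variable {G X : Type*} [Group G] [MulAction G X]

lemma sum_comp_smul [Fintype X] (g : G) (φ : X → ℝ) : ∑ x, φ (g • x) = ∑ x, φ x :=
  Equiv.sum_comp (MulAction.toPerm g) φ

variable [Fintype G]

lemma exists_sum_smul_mul_smul_eq [MulAction.IsMultiplyPretransitive G X 2] [Nontrivial X]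
    (f : X → ℝ) : ∃ d c : ℝ, (∀ x, ∑ g : G, f (g • x) * f (g • x) = d) ∧
      ∀ x y, x ≠ y → ∑ g : G, f (g • x) * f (g • y) = c := by
  set P : X → X → ℝ := fun x y => ∑ g : G, f (g • x) * f (g • y)
  have hinv (h : G) (x y : X) : P (h • x) (h • y) = P x y := by
    simp only [P, ← mul_smul]
    exact Equiv.sum_comp (Equiv.mulRight h) fun g => f (g • x) * f (g • y)
  have := MulAction.isPretransitive_of_is_two_pretransitive (G := G) (α := X)
  obtain ⟨a, b, hab⟩ := exists_pair_ne X
  refine ⟨P a a, P a b, fun x => ?_, fun x y hxy => ?_⟩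
  · obtain ⟨g, rfl⟩ := MulAction.exists_smul_eq G a x
    exact hinv g a a
  · obtain ⟨g, rfl, rfl⟩ := MulAction.is_two_pretransitive_iff.1 ‹_› hab hxy
    exact hinv g a b

/-- The operator on functions on `X` that averages the translates by `g` with weights `m g`. -/
def averagingOp (m : G → ℝ) (f : X → ℝ) (x : X) : ℝ := ∑ g, m g * f (g⁻¹ • x)

lemma averagingOp_groupConv (m m' : G → ℝ) (f : X → ℝ) :
    averagingOp (m ⋆ m') f = averagingOp m (averagingOp m' f) := by
  funext x
  simp only [averagingOp, groupConv, sum_mul, mul_sum]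
  rw [sum_comm]
  refine sum_congr rfl fun y _ => ?_
  rw [← Equiv.sum_comp (Equiv.mulLeft y)]
  refine sum_congr rfl fun g _ => ?_
  simp only [Equiv.coe_mulLeft, inv_mul_cancel_left, mul_inv_rev, mul_smul, mul_assoc]

variable [Fintype X]

lemma sum_sq_sum_mul_smul [MulAction.IsMultiplyPretransitive G X 2] [Nontrivial X]
    {f : X → ℝ} (hf : ∑ x, f x = 0) :
    (∑ g : G, (∑ x, f x * f (g • x)) ^ 2) * (Fintype.card X - 1) =
      Fintype.card G * (∑ x, f x ^ 2) ^ 2 := by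
  classical
  obtain ⟨d, c, hd, hc⟩ := exists_sum_smul_mul_smul_eq (G := G) f
  have hP (x y : X) : ∑ g : G, f (g • x) * f (g • y) = c + if x = y then d - c else 0 := by
    split_ifs with hxy
    · rw [hxy, hd]; ring
    · rw [hc x y hxy, add_zero]
  have hrow : d + (Fintype.card X - 1) * c = 0 := by
    obtain ⟨a⟩ := (inferInstance : Nonempty X)
    have hzero : ∑ y, ∑ g : G, f (g • a) * f (g • y) = 0 := by
      rw [sum_comm]
      exact sum_eq_zero fun g _ => by rw [← mul_sum, sum_comp_smul g f, hf, mul_zero]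
    simp only [hP, sum_add_distrib, sum_const, sum_ite_eq, mem_univ, if_true, card_univ,
      nsmul_eq_mul] at hzero
    linarith
  have htrace : Fintype.card X * d = Fintype.card G * ∑ x, f x ^ 2 := by
    calc Fintype.card X * d = ∑ x, ∑ g : G, f (g • x) * f (g • x) := by
          simp only [hd, sum_const, card_univ, nsmul_eq_mul]
      _ = ∑ _g : G, ∑ x, f x * f x := by
          rw [sum_comm]; exact sum_congr rfl fun g _ => sum_comp_smul g fun x => f x * f x
      _ = Fintype.card G * ∑ x, f x ^ 2 := by
          simp only [sum_const, card_univ, nsmul_eq_mul, sq]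
  have hsq : ∑ g : G, (∑ x, f x * f (g • x)) ^ 2 = (d - c) * ∑ x, f x ^ 2 := by
    calc ∑ g : G, (∑ x, f x * f (g • x)) ^ 2
        = ∑ g : G, ∑ x, ∑ y, f x * f y * (f (g • x) * f (g • y)) := by
          simp only [sq, sum_mul_sum, mul_mul_mul_comm]
      _ = ∑ x, ∑ y, f x * f y * ∑ g : G, f (g • x) * f (g • y) := by
          rw [sum_comm]; exact sum_congr rfl fun x _ => by rw [sum_comm]; simp only [mul_sum]
      _ = ∑ x, f x * (c * ∑ y, f y + f x * (d - c)) := by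
          refine sum_congr rfl fun x _ => ?_
          simp only [hP, mul_add, mul_ite, mul_zero, sum_add_distrib, sum_ite_eq, mem_univ,
            if_true, mul_sum]
          exact congrArg₂ _ (sum_congr rfl fun y _ => by ring) (by ring)
      _ = (d - c) * ∑ x, f x ^ 2 := by
          rw [hf, mul_sum]; exact sum_congr rfl fun x _ => by ring
  rw [hsq]
  linear_combination (∑ x, f x ^ 2) * htrace - (∑ x, f x ^ 2) * hrow

/-- The quadratic form of `averagingOp m`. -/
def correlation (m : G → ℝ) (f : X → ℝ) : ℝ := ∑ x, f x * averagingOp m f x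

lemma sum_mul_averagingOp (m : G → ℝ) (a b : X → ℝ) :
    ∑ x, a x * averagingOp m b x = ∑ x, averagingOp (fun g => m g⁻¹) a x * b x := by
  simp only [averagingOp, mul_sum, sum_mul]
  rw [sum_comm, sum_comm (s := univ (α := X)), ← Equiv.sum_comp (Equiv.inv G)]
  refine sum_congr rfl fun g _ => ?_
  rw [← sum_comp_smul g⁻¹]
  refine sum_congr rfl fun x _ => ?_
  simp only [Equiv.inv_apply, inv_inv, smul_inv_smul]
  ring

lemma correlation_eq_sum (m : G → ℝ) (f : X → ℝ) :
    correlation m f = ∑ g, m g * ∑ x, f x * f (g⁻¹ • x) := by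
  simp only [correlation, averagingOp, mul_sum, mul_left_comm]
  exact sum_comm

lemma correlation_sq_le (m : G → ℝ) (f : X → ℝ) :
    correlation m f ^ 2 ≤ (∑ x, f x ^ 2) * correlation (m ⋆ fun g => m g⁻¹) f := by
  have hadj : correlation m f = ∑ x, f x * averagingOp (fun g => m g⁻¹) f x := by
    simp only [correlation, sum_mul_averagingOp m, mul_comm]
  have hnorm : correlation (m ⋆ fun g => m g⁻¹) f =
      ∑ x, averagingOp (fun g => m g⁻¹) f x ^ 2 := by
    simp only [correlation, averagingOp_groupConv, sum_mul_averagingOp m, sq]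
  rw [hadj, hnorm]
  exact sum_mul_sq_le_sq_mul_sq _ _ _

lemma abs_correlation_div_sq_le (m : G → ℝ) {f : X → ℝ} (hf : 0 < ∑ x, f x ^ 2) :
    (|correlation m f| / ∑ x, f x ^ 2) ^ 2 ≤
      |correlation (m ⋆ fun g => m g⁻¹) f| / ∑ x, f x ^ 2 := by
  rw [div_pow, sq_abs, div_le_div_iff₀ (by positivity) hf]
  calc correlation m f ^ 2 * ∑ x, f x ^ 2
      ≤ (∑ x, f x ^ 2) * |correlation (m ⋆ fun g => m g⁻¹) f| * ∑ x, f x ^ 2 := by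
        gcongr
        exact (correlation_sq_le m f).trans (by gcongr; exact le_abs_self _)
    _ = |correlation (m ⋆ fun g => m g⁻¹) f| * (∑ x, f x ^ 2) ^ 2 := by ring

lemma correlation_sq_mul_le [MulAction.IsMultiplyPretransitive G X 2] [Nontrivial X]
    {f : X → ℝ} (hf : ∑ x, f x = 0) (m : G → ℝ) :
    correlation m f ^ 2 * (Fintype.card X - 1) ≤
      (∑ g, m g ^ 2) * (Fintype.card G * (∑ x, f x ^ 2) ^ 2) := by
  have hcard : (0 : ℝ) ≤ Fintype.card X - 1 :=
    sub_nonneg.2 (by exact_mod_cast Fintype.card_pos (α := X))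
  rw [← sum_sq_sum_mul_smul hf, ← mul_assoc, correlation_eq_sum,
    ← Equiv.sum_comp (Equiv.inv G) fun g => (∑ x, f x * f (g • x)) ^ 2]
  gcongr
  exact sum_mul_sq_le_sq_mul_sq _ _ _

end Quasirandomness

section DyadicPowers

variable {G : Type*} [Group G] [Fintype G] {κ : G → ℝ}

/-- The convolution power of `κ` with exponent `2 ^ j`. -/
noncomputable def dyadicConvPow (κ : G → ℝ) : ℕ → G → ℝ
  | 0 => κ
  | j + 1 => dyadicConvPow κ j ⋆ dyadicConvPow κ j

lemma IsSymmProb.convPow (hκ : IsSymmProb κ) (j : ℕ) : IsSymmProb (dyadicConvPow κ j) := by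
  induction j with
  | zero => exact hκ
  | succ j ih => exact ih.conv_self

variable {X : Type*} [Fintype X] [MulAction G X]

lemma IsSymmProb.abs_correlation_div_pow_le (hκ : IsSymmProb κ) {f : X → ℝ}
    (hf : 0 < ∑ x, f x ^ 2) (j : ℕ) :
    (|correlation κ f| / ∑ x, f x ^ 2) ^ 2 ^ j ≤
      |correlation (dyadicConvPow κ j) f| / ∑ x, f x ^ 2 := by
  induction j with
  | zero => simp [dyadicConvPow]
  | succ j ih =>
    set N := ∑ x, f x ^ 2
    rw [pow_succ, pow_mul]
    calc ((|correlation κ f| / N) ^ 2 ^ j) ^ 2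
        ≤ (|correlation (dyadicConvPow κ j) f| / N) ^ 2 := by gcongr
      _ ≤ |correlation (dyadicConvPow κ (j + 1)) f| / N := by
        simpa only [dyadicConvPow, (hκ.convPow j).inv_eq] using
          abs_correlation_div_sq_le (dyadicConvPow κ j) hf

end DyadicPowers

/-! ### The projective line -/

section ProjectiveLine

open scoped LinearAlgebra.Projectivization

variable {F : Type*} [Field F]

lemma card_sl2_le [Fintype F] [DecidableEq F] :
    Fintype.card SL(2, F) ≤ Fintype.card F ^ 3 := by
  have hne : (![1, 0] : Fin 2 → F) ≠ 0 := fun h => one_ne_zero (congrFun h 0)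
  have hfixers : #(fixers (univ⁻¹ * univ : Finset SL(2, F)) (![1, 0] : Fin 2 → F)) ≤
      Fintype.card F := by
    rw [← card_univ (α := F)]
    refine card_le_card_of_surjOn (skewTransvection ![1, 0]) fun g hg => ?_
    obtain ⟨t, rfl⟩ := exists_eq_skewTransvection hne (mem_fixers.1 hg).2
    exact ⟨t, mem_coe.2 (mem_univ t), rfl⟩
  calc Fintype.card SL(2, F)
      ≤ #(fixers (univ⁻¹ * univ : Finset SL(2, F)) (![1, 0] : Fin 2 → F)) *
          #(univ.image fun g : SL(2, F) => g • (![1, 0] : Fin 2 → F)) :=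
        card_le_card_fixers_mul_card_image _ _
    _ ≤ Fintype.card F * Fintype.card (Fin 2 → F) := by
        gcongr; exact card_le_univ _
    _ = Fintype.card F ^ 3 := by rw [Fintype.card_fun, Fintype.card_fin]; ring

noncomputable instance fintypeProjectiveLine [Fintype F] : Fintype (ℙ F (Fin 2 → F)) :=
  Fintype.ofFinite _

lemma card_projectiveLine [Fintype F] :
    Fintype.card (ℙ F (Fin 2 → F)) = Fintype.card F + 1 := by
  rw [← Nat.card_eq_fintype_card, Projectivization.card_of_finrank_two F _ (by simp),
    Nat.card_eq_fintype_card]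

lemma correlation_projectiveLine_sq_le [Fintype F] [DecidableEq F] {f : ℙ F (Fin 2 → F) → ℝ}
    (hf : ∑ x, f x = 0) (m : SL(2, F) → ℝ) :
    correlation m f ^ 2 ≤ (Fintype.card F : ℝ) ^ 2 * (∑ g, m g ^ 2) * (∑ x, f x ^ 2) ^ 2 := by
  have hq : (0 : ℝ) < Fintype.card F := by exact_mod_cast Fintype.card_pos
  have : Nontrivial (ℙ F (Fin 2 → F)) := Fintype.one_lt_card_iff_nontrivial.1 <| by
    rw [card_projectiveLine]; exact Nat.lt_add_of_pos_left Fintype.card_pos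
  have hcorr := correlation_sq_mul_le hf m
  rw [card_projectiveLine, Nat.cast_succ, add_sub_cancel_right] at hcorr
  have hsl : (Fintype.card SL(2, F) : ℝ) ≤ (Fintype.card F : ℝ) ^ 3 := by
    exact_mod_cast card_sl2_le
  refine le_of_mul_le_mul_right ?_ hq
  calc correlation m f ^ 2 * Fintype.card F
      ≤ (∑ g, m g ^ 2) * (Fintype.card SL(2, F) * (∑ x, f x ^ 2) ^ 2) := hcorr
    _ ≤ (∑ g, m g ^ 2) * ((Fintype.card F : ℝ) ^ 3 * (∑ x, f x ^ 2) ^ 2) := by gcongr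
    _ = (Fintype.card F : ℝ) ^ 2 * (∑ g, m g ^ 2) * (∑ x, f x ^ 2) ^ 2 * Fintype.card F := by
        ring

/-- The point `[s : 1]` of the projective line. -/
def affinePoint (s : F) : ℙ F (Fin 2 → F) :=
  .mk F ![s, 1] fun h => one_ne_zero (congrFun h 1)

lemma affinePoint_injective : Function.Injective (affinePoint (F := F)) := by
  intro s s' h
  obtain ⟨a, ha⟩ := (Projectivization.mk_eq_mk_iff' ..).1 h
  have h1 : a = 1 := by simpa using congrFun ha 1
  simpa [h1] using (congrFun ha 0).symm

lemma smul_affinePoint_eq {g : SL(2, F)} {s s' a : F} (h : a • ![s', 1] = g • ![s, 1]) :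
    g • affinePoint s = affinePoint s' := by
  rw [affinePoint, Projectivization.smul_mk, affinePoint, Projectivization.mk_eq_mk_iff']
  exact ⟨a, h⟩

/-- The matrix `!![1, b; 0, 1]`, acting on the affine line as translation by `b`. -/
def translation (b : F) : SL(2, F) := skewTransvection ![1, 0] b

/-- The matrix `!![1, 0; l, 1]`, acting on the affine line as translation by `l` in the coordinate
`s⁻¹`. -/
def inverseTranslation (l : F) : SL(2, F) := skewTransvection ![0, 1] (-l)

lemma translation_smul_affinePoint (b s : F) :
    translation b • affinePoint s = affinePoint (s + b) :=
  smul_affinePoint_eq (a := 1) <| by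
    rw [translation, skewTransvection_smul]
    ext i; fin_cases i <;> simp [wedge]

lemma inverseTranslation_smul_affinePoint {l s s' : F} (hs : s ≠ 0) (hs' : s' ≠ 0)
    (h : s'⁻¹ - s⁻¹ = l) : inverseTranslation l • affinePoint s = affinePoint s' :=
  smul_affinePoint_eq (a := l * s + 1) <| by
    rw [inverseTranslation, skewTransvection_smul, ← h]
    ext i; fin_cases i <;> simp [wedge] <;> field_simp <;> ring

end ProjectiveLine

/-! ### The random walk on `SL₂` attached to `l` and `B` -/

lemma isSymmProb_groupConv_inv {G : Type*} [Group G] [Fintype G] {f : G → ℝ}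
    (hf : ∀ x, 0 ≤ f x) (hsum : ∑ x, f x = 1) : IsSymmProb (f ⋆ fun g => f g⁻¹) where
  nonneg _ := sum_nonneg fun _ _ => mul_nonneg (hf _) (hf _)
  inv_eq x := by simp only [groupConv_inv, inv_inv]
  sum_eq_one := by
    have hinv : ∑ x, f x⁻¹ = ∑ x, f x := Equiv.sum_comp (Equiv.inv G) f
    rw [sum_groupConv, hinv, hsum, one_mul]

section EmpiricalDensity

variable {ι G : Type*} [DecidableEq G]

/-- The density on `G` of the image under `w` of the uniform distribution on `s`. -/
noncomputable def empiricalDensity (s : Finset ι) (w : ι → G) (g : G) : ℝ :=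
  #{i ∈ s | w i = g} / #s

lemma empiricalDensity_nonneg (s : Finset ι) (w : ι → G) (g : G) : 0 ≤ empiricalDensity s w g := by
  unfold empiricalDensity; positivity

variable [Fintype G]

lemma sum_empiricalDensity_mul (s : Finset ι) (w : ι → G) (φ : G → ℝ) :
    ∑ g, empiricalDensity s w g * φ g = (∑ i ∈ s, φ (w i)) / #s := by
  simp only [empiricalDensity, div_mul_eq_mul_div, ← sum_div, card_filter, Nat.cast_sum, sum_mul]
  rw [sum_comm]
  simp

lemma sum_empiricalDensity {s : Finset ι} (hs : s.Nonempty) (w : ι → G) :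
    ∑ g, empiricalDensity s w g = 1 := by
  have hcard : (#s : ℝ) ≠ 0 := by exact_mod_cast hs.card_ne_zero
  simpa [hcard] using sum_empiricalDensity_mul s w fun _ => 1

variable [Group G]

lemma sum_empiricalDensity_conv_inv (s : Finset ι) (w : ι → G) (Y : Finset G) :
    ∑ g ∈ Y, (empiricalDensity s w ⋆ fun g => empiricalDensity s w g⁻¹) g =
      #{q ∈ s ×ˢ s | w q.1 * (w q.2)⁻¹ ∈ Y} / (#s : ℝ) ^ 2 := by
  set μ := empiricalDensity s w
  have hexpand : ∑ g ∈ Y, (μ ⋆ fun g => μ g⁻¹) g =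
      ∑ y, μ y * ∑ z, μ z * if y * z⁻¹ ∈ Y then 1 else 0 := by
    have hinner (y : G) : ∑ z, μ z * (if y * z⁻¹ ∈ Y then 1 else 0) =
        ∑ g ∈ Y, μ (y⁻¹ * g)⁻¹ := by
      rw [← Equiv.sum_comp ((Equiv.mulLeft y⁻¹).trans (Equiv.inv G))]
      simp
    simp only [hinner, groupConv, mul_sum]
    exact sum_comm
  rw [hexpand]
  simp only [μ, sum_empiricalDensity_mul, card_filter, Nat.cast_sum, sum_product, ← sum_div,
    Nat.cast_ite, Nat.cast_one, Nat.cast_zero, div_div, sq]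

end EmpiricalDensity

section Words

variable {F : Type*} [Field F]

/-- The word `u(b₁) h(l) u(-b₂)`, where `u` and `h` are `translation` and `inverseTranslation`. -/
def hingeWord (l : F) (b : F × F) : SL(2, F) :=
  translation b.1 * inverseTranslation l * translation (-b.2)

lemma hingeWord_smul_affinePoint {l s s' b b' : F} (hs : s ≠ 0) (hs' : s' ≠ 0)
    (h : s'⁻¹ - s⁻¹ = l) :
    hingeWord l (b', b) • affinePoint (s + b) = affinePoint (s' + b') := by
  rw [hingeWord, mul_smul, mul_smul, translation_smul_affinePoint, add_neg_cancel_right,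
    inverseTranslation_smul_affinePoint hs hs' h, translation_smul_affinePoint]

lemma hingeWord_mul_inv_of_snd_eq (l a a' b : F) :
    hingeWord l (a, b) * (hingeWord l (a', b))⁻¹ = skewTransvection ![1, 0] (a - a') := by
  rw [sub_eq_add_neg, ← skewTransvection_mul, ← skewTransvection_inv]
  simp only [hingeWord, translation]
  group

lemma hingeWord_mul_inv_of_fst_eq (l a b b' : F) :
    hingeWord l (a, b) * (hingeWord l (a, b'))⁻¹ =
      skewTransvection ((translation a * inverseTranslation l) • ![1, 0]) (b' - b) := by
  rw [← conj_skewTransvection, sub_eq_neg_add, ← skewTransvection_mul, ← skewTransvection_inv]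
  simp only [hingeWord, translation, ← skewTransvection_inv]
  group

lemma wedge_translation_mul_inverseTranslation_smul (l a : F) :
    wedge ![1, 0] ((translation a * inverseTranslation l) • ![1, 0]) = l := by
  rw [mul_smul, translation, inverseTranslation, skewTransvection_smul, skewTransvection_smul]
  simp [wedge]

variable [DecidableEq F] {B : Finset F}

/-- The density of `hingeWord l b` for `b` uniform in `B ×ˢ B`. -/
noncomputable def hingeDensity (l : F) (B : Finset F) : SL(2, F) → ℝ :=
  empiricalDensity (B ×ˢ B) (hingeWord l)

lemma hingeDensity_le (l : F) (hB : B.Nonempty) (g : SL(2, F)) :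
    hingeDensity l B g ≤ 1 / #B := by
  have hfibre : #{b ∈ B ×ˢ B | hingeWord l b = g} ≤ #B := by
    refine card_le_card_of_injOn Prod.snd
      (fun b hb => (mem_product.1 (mem_filter.1 hb).1).2) ?_
    rintro ⟨a, b⟩ h ⟨a', b'⟩ h' (rfl : b = b')
    have hquot := hingeWord_mul_inv_of_snd_eq l a a' b
    rw [(mem_filter.1 h).2, (mem_filter.1 h').2, mul_inv_cancel] at hquot
    have haa' : a - a' = 0 := by
      by_contra hne
      exact skewTransvection_ne_one (fun h => one_ne_zero (congrFun h 0)) hne hquot.symm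
    rw [sub_eq_zero.1 haa']
  have : (0 : ℝ) < #B := by exact_mod_cast hB.card_pos
  calc hingeDensity l B g = #{b ∈ B ×ˢ B | hingeWord l b = g} / #(B ×ˢ B) := rfl
    _ ≤ #B / #(B ×ˢ B) := by gcongr
    _ = 1 / #B := by rw [card_product, Nat.cast_mul]; field_simp

variable [Fintype F]

/-- The density of `x * y⁻¹` for `x` and `y` independent with density `hingeDensity l B`. -/
noncomputable def hingeKernel (l : F) (B : Finset F) : SL(2, F) → ℝ :=
  hingeDensity l B ⋆ fun g => hingeDensity l B g⁻¹

lemma sum_hingeDensity (l : F) (hB : B.Nonempty) : ∑ g, hingeDensity l B g = 1 :=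
  sum_empiricalDensity (hB.product hB) _

lemma isSymmProb_hingeKernel (l : F) (hB : B.Nonempty) : IsSymmProb (hingeKernel l B) :=
  isSymmProb_groupConv_inv (empiricalDensity_nonneg _ _) (sum_hingeDensity l hB)

lemma hingeKernel_le (l : F) (hB : B.Nonempty) (g : SL(2, F)) : hingeKernel l B g ≤ 1 / #B :=
  groupConv_le (empiricalDensity_nonneg _ _) (sum_hingeDensity l hB)
    (fun _ => hingeDensity_le l hB _) g

lemma card_pow_three_lt_of_lt_sum_hingeKernel {l : F} (hB : B.Nonempty) {Y : Finset SL(2, F)}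
    (h : 1 / (#B : ℝ) < ∑ g ∈ Y, hingeKernel l B g) :
    #B ^ 3 < #{q ∈ (B ×ˢ B) ×ˢ (B ×ˢ B) | hingeWord l q.1 * (hingeWord l q.2)⁻¹ ∈ Y} := by
  have hcard : (0 : ℝ) < #B := by exact_mod_cast hB.card_pos
  rw [hingeKernel, hingeDensity, sum_empiricalDensity_conv_inv, card_product, Nat.cast_mul,
    div_lt_div_iff₀ hcard (by positivity), one_mul] at h
  rw [show ((#B : ℝ) * #B) ^ 2 = (#B : ℝ) ^ 3 * #B by ring] at h
  exact_mod_cast lt_of_mul_lt_mul_right h hcard.le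

end Words

section Noncollapse

lemma inv_mul_mem_pow_four {G : Type*} [Group G] [DecidableEq G] {S : Finset G} (hS : S⁻¹ = S)
    {x g g' : G} (hg : g ∈ x • S ^ 2) (hg' : g' ∈ x • S ^ 2) : g⁻¹ * g' ∈ S ^ 4 := by
  obtain ⟨s, hs, rfl⟩ := mem_smul_finset.1 hg
  obtain ⟨s', hs', rfl⟩ := mem_smul_finset.1 hg'
  have hinv : s⁻¹ ∈ S ^ 2 := by rw [← hS, inv_pow]; exact inv_mem_inv hs
  rw [smul_eq_mul, smul_eq_mul, mul_inv_rev, mul_assoc, inv_mul_cancel_left,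
    show 4 = 2 + 2 from rfl, pow_add]
  exact mul_mem_mul hinv hs'

variable {F : Type*} [Field F] [DecidableEq F]

lemma hasFixer_of_skewTransvection_mem {S : Finset SL(2, F)} {v : Fin 2 → F} {t : F} (hv : v ≠ 0)
    (ht : t ≠ 0) (h : skewTransvection v t ∈ S ^ 4) : HasFixer S v :=
  ⟨hv, _, h, skewTransvection_ne_one hv ht, skewTransvection_smul_self v t⟩

variable [Fintype F]

lemma exists_hasFixer_of_lt_sum_hingeKernel {l : F} (hl : l ≠ 0) {B : Finset F}
    (hB : B.Nonempty) {S : Finset SL(2, F)} (hS : S⁻¹ = S) {x : SL(2, F)}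
    (h : 1 / (#B : ℝ) < ∑ g ∈ x • S ^ 2, hingeKernel l B g) :
    ∃ v w, HasFixer S v ∧ HasFixer S w ∧ wedge v w ≠ 0 := by
  have hQ := card_pow_three_lt_of_lt_sum_hingeKernel hB h
  set Q := {q ∈ (B ×ˢ B) ×ˢ (B ×ˢ B) | hingeWord l q.1 * (hingeWord l q.2)⁻¹ ∈ x • S ^ 2}
  have hcard : #(B ×ˢ B ×ˢ B) < #Q := by
    rw [card_product, card_product]; linarith
  have hmem {q} (hq : q ∈ Q) : q.1.1 ∈ B ∧ q.1.2 ∈ B ∧ q.2.1 ∈ B ∧ q.2.2 ∈ B := by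
    simpa only [mem_product, and_assoc] using (mem_filter.1 hq).1
  have hquot {b c c'} (hq : (b, c) ∈ Q) (hq' : (b, c') ∈ Q) :
      hingeWord l c * (hingeWord l c')⁻¹ ∈ S ^ 4 := by
    simpa only [mul_inv_rev, inv_inv, mul_assoc, inv_mul_cancel_left] using
      inv_mul_mem_pow_four hS (mem_filter.1 hq).2 (mem_filter.1 hq').2
  obtain ⟨⟨b, c₁, c₂⟩, hq, ⟨b', c₁', c₂'⟩, hq', hne, heq⟩ :=
    exists_ne_map_eq_of_card_lt_of_maps_to hcard (f := fun q => (q.1.1, q.1.2, q.2.2))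
      fun q hq => by have := hmem hq; simp only [mem_coe, mem_product]; tauto
  obtain ⟨⟨d, e₁, e₂⟩, hr, ⟨d', e₁', e₂'⟩, hr', hne', heq'⟩ :=
    exists_ne_map_eq_of_card_lt_of_maps_to hcard (f := fun q => (q.1.1, q.1.2, q.2.1))
      fun q hq => by have := hmem hq; simp only [mem_coe, mem_product]; tauto
  obtain ⟨rfl, rfl⟩ : b = b' ∧ c₂ = c₂' := by simpa [Prod.ext_iff, and_assoc] using heq
  obtain ⟨rfl, rfl⟩ : d = d' ∧ e₁ = e₁' := by simpa [Prod.ext_iff, and_assoc] using heq'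
  have hv : (![1, 0] : Fin 2 → F) ≠ 0 := fun h => one_ne_zero (congrFun h 0)
  refine ⟨![1, 0], (translation e₁ * inverseTranslation l) • ![1, 0],
    hasFixer_of_skewTransvection_mem hv (sub_ne_zero.2 fun hc => hne (by rw [hc]))
      (hingeWord_mul_inv_of_snd_eq l c₁ c₁' c₂ ▸ hquot hq hq'),
    hasFixer_of_skewTransvection_mem ((smul_ne_zero_iff_ne _).2 hv)
      (sub_ne_zero.2 fun hc => hne' (by rw [hc]))
      (hingeWord_mul_inv_of_fst_eq l e₁ e₂ e₂' ▸ hquot hr hr'), ?_⟩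
  rwa [wedge_translation_mul_inverseTranslation_smul]

end Noncollapse

/-! ### Flattening of convolution powers -/

section ReturnProbability

variable {G : Type*} [Group G] [Fintype G] {κ ν : G → ℝ} {M : ℝ}

lemma IsSymmProb.conv_self_one_pos (hν : IsSymmProb ν) : 0 < (ν ⋆ ν) 1 := by
  obtain ⟨x, -, hx⟩ : ∃ x ∈ univ, ν x ≠ 0 :=
    exists_ne_zero_of_sum_ne_zero (by rw [hν.sum_eq_one]; exact one_ne_zero)
  rw [hν.conv_self_one]
  exact sum_pos' (fun x _ => sq_nonneg _) ⟨x, mem_univ x, by positivity⟩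

lemma IsSymmProb.dyadicConvPow_one_anti (hκ : IsSymmProb κ) (j : ℕ) :
    dyadicConvPow κ (j + 2) 1 ≤ dyadicConvPow κ (j + 1) 1 :=
  groupConv_le (hκ.convPow (j + 1)).nonneg (hκ.convPow (j + 1)).sum_eq_one
    (hκ.convPow j).conv_self_le_conv_self_one 1

lemma IsSymmProb.dyadicConvPow_one_le (hκ : IsSymmProb κ) (hM : ∀ x, κ x ≤ M) (j : ℕ) :
    dyadicConvPow κ (j + 1) 1 ≤ M := by
  induction j with
  | zero => exact groupConv_le hκ.nonneg hκ.sum_eq_one hM 1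
  | succ j ih => exact (hκ.dyadicConvPow_one_anti j).trans ih

end ReturnProbability

section Flattening

variable {G : Type*} [Group G] [DecidableEq G]

lemma sum_smul_finset (y : G) (T : Finset G) (φ : G → ℝ) :
    ∑ g ∈ y • T, φ g = ∑ g ∈ T, φ (y * g) :=
  sum_image (mul_right_injective y).injOn

lemma exists_le_sum_smul_of_subset_mul {ν : G → ℝ} (hν : ∀ x, 0 ≤ ν x) {A E T : Finset G} {c d : ℝ}
    (hc : 0 < c) (hd : 0 < d) (hA : c ≤ ∑ x ∈ A, ν x) (hE : (#E : ℝ) ≤ d) (hcover : A ⊆ E * T) :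
    ∃ x : G, c / d ≤ ∑ g ∈ x • T, ν g := by
  have hsum : c ≤ ∑ x ∈ E, ∑ g ∈ x • T, ν g := calc
    c ≤ ∑ x ∈ A, ν x := hA
    _ ≤ ∑ x ∈ E * T, ν x := sum_le_sum_of_subset_of_nonneg hcover fun x _ _ => hν x
    _ ≤ ∑ q ∈ E ×ˢ T, ν (q.1 * q.2) := sum_image_le_of_nonneg fun _ _ => hν _
    _ = ∑ x ∈ E, ∑ g ∈ x • T, ν g := by simp only [sum_product, sum_smul_finset]
  have hE0 : E.Nonempty := by
    by_contra! hempty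
    rw [hempty, sum_empty] at hsum
    linarith
  obtain ⟨x, -, hx⟩ : ∃ x ∈ E, c / d ≤ ∑ g ∈ x • T, ν g := by
    refine exists_le_of_sum_le hE0 (le_trans ?_ hsum)
    calc ∑ _x ∈ E, c / d = #E * (c / d) := by rw [sum_const, nsmul_eq_mul]
      _ ≤ d * (c / d) := by gcongr
      _ = c := by field_simp
  exact ⟨x, hx⟩

variable [Fintype G] {κ ν : G → ℝ} {M D : ℝ}

lemma IsSymmProb.exists_le_sum_smul_of_conv_self (hν : IsSymmProb ν) {T : Finset G} {c : ℝ} {x : G}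
    (h : c ≤ ∑ g ∈ x • T, (ν ⋆ ν) g) : ∃ y : G, c ≤ ∑ g ∈ y • T, ν g := by
  have hsum : ∑ g ∈ x • T, (ν ⋆ ν) g = ∑ y, ν y * ∑ g ∈ (y⁻¹ * x) • T, ν g := by
    simp only [groupConv]
    rw [sum_comm]
    simp only [sum_smul_finset, mul_assoc, mul_sum]
  obtain ⟨y, hy⟩ := exists_le_of_le_sum_weight_mul hν.nonneg hν.sum_eq_one (hsum ▸ h)
  exact ⟨_, hy⟩

lemma IsSymmProb.exists_le_sum_smul_of_dyadicConvPow (hκ : IsSymmProb κ) {T : Finset G} {c : ℝ}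
    (j : ℕ) {x : G} (h : c ≤ ∑ g ∈ x • T, dyadicConvPow κ j g) :
    ∃ y : G, c ≤ ∑ g ∈ y • T, κ g := by
  induction j generalizing x with
  | zero => exact ⟨x, h⟩
  | succ j ih =>
    obtain ⟨y, hy⟩ := (hκ.convPow j).exists_le_sum_smul_of_conv_self h
    exact ih hy

lemma IsSymmProb.exists_subset_card_inv_mul_le (hν : IsSymmProb ν) (hsup : ∀ x, ν x ≤ M)
    (hM : 0 < M) (hD : 0 < D) (henergy : M / D ≤ (ν ⋆ ν ⋆ (ν ⋆ ν)) 1) :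
    ∃ A : Finset G, 1 / (4 * D) ≤ ∑ x ∈ A, ν x ∧ #(A⁻¹ * A) * M ≤ 1024 * D ^ 5 := by
  have hν₂ := hν.conv_self
  have hν₈ := hν₂.conv_self.conv_self
  set ν₈ := ν ⋆ ν ⋆ (ν ⋆ ν) ⋆ (ν ⋆ ν ⋆ (ν ⋆ ν))
  obtain ⟨A, hA, hpaths⟩ := exists_subset_le_mul_mul_mul_apply hν.nonneg hν.sum_eq_one hsup
    (F := cayleyMatrix (ν ⋆ ν)) (fun _ _ => hν₂.nonneg _)
    (fun _ _ => groupConv_le hν.nonneg hν.sum_eq_one hsup _) hν₂.isSymm_cayleyMatrix hM hD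
    (henergy.trans_eq hν.sum_mul_vecMul_cayleyMatrix_conv_self.symm)
  rw [cayleyMatrix_mul, cayleyMatrix_mul] at hpaths
  refine ⟨A, hA, ?_⟩
  have hpopular (g : G) (hg : g ∈ A⁻¹ * A) : M / (1024 * D ^ 5) ≤ ν₈ g := by
    obtain ⟨a, ha, b, hb, rfl⟩ := mem_mul.1 hg
    simpa only [cayleyMatrix, Matrix.of_apply, inv_inv] using hpaths a⁻¹ (mem_inv'.1 ha) b hb
  have hcard : #(A⁻¹ * A) * (M / (1024 * D ^ 5)) ≤ 1 := calc
    #(A⁻¹ * A) * (M / (1024 * D ^ 5)) ≤ ∑ g ∈ A⁻¹ * A, ν₈ g := by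
      rw [← nsmul_eq_mul]; exact card_nsmul_le_sum _ _ _ hpopular
    _ ≤ ∑ g, ν₈ g := sum_le_univ_sum_of_nonneg hν₈.nonneg
    _ = 1 := hν₈.sum_eq_one
  rwa [mul_div_assoc', div_le_one (by positivity)] at hcard

lemma IsSymmProb.exists_subset_small_doubling (hν : IsSymmProb ν) (hsup : ∀ x, ν x ≤ M)
    (hM : 0 < M) (hD : 4096 ≤ D) (henergy : M / D ≤ (ν ⋆ ν ⋆ (ν ⋆ ν)) 1) :
    ∃ A : Finset G, A.Nonempty ∧ 1 / (4 * D) ≤ ∑ x ∈ A, ν x ∧ 1 ≤ 4 * D * M * #A ∧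
      #(A⁻¹ * A) * M ≤ 1024 * D ^ 5 ∧ (#(A⁻¹ * A) : ℝ) ≤ D ^ 7 * #A := by
  have hD0 : 0 < D := by linarith
  obtain ⟨A, hA, hquot⟩ := hν.exists_subset_card_inv_mul_le hsup hM hD0 henergy
  have hcard : 1 ≤ 4 * D * M * #A := by
    have : ∑ x ∈ A, ν x ≤ #A * M := by
      rw [← nsmul_eq_mul]; exact sum_le_card_nsmul _ _ _ fun x _ => hsup x
    have := hA.trans this
    rw [div_le_iff₀ (by positivity)] at this
    linarith
  have hne : A.Nonempty := by
    by_contra! hempty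
    rw [hempty, card_empty] at hcard
    norm_num at hcard
  refine ⟨A, hne, hA, hcard, hquot, le_of_mul_le_mul_right ?_ hM⟩
  calc #(A⁻¹ * A) * M ≤ 1024 * D ^ 5 * 1 := by linarith
    _ ≤ 1024 * D ^ 5 * (4 * D * M * #A) := by gcongr
    _ = 4096 * (D ^ 6 * #A * M) := by ring
    _ ≤ D * (D ^ 6 * #A * M) := by gcongr
    _ = D ^ 7 * #A * M := by ring

lemma IsSymmProb.exists_approximate_group (hν : IsSymmProb ν) (hsup : ∀ x, ν x ≤ M)
    (hM : 0 < M) (hD : 4096 ≤ D) (henergy : M / D ≤ (ν ⋆ ν ⋆ (ν ⋆ ν)) 1) :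
    ∃ S : Finset G, S⁻¹ = S ∧ 1 ∈ S ∧ (∀ n, (#(S ^ n) : ℝ) ≤ D ^ (15 * n + 8) * #S) ∧
      #S * M ≤ D ^ 21 ∧ 1 ≤ D ^ 10 * #S * M ∧ ∃ x : G, 1 / D ^ 24 ≤ ∑ g ∈ x • S ^ 2, ν g := by
  have : 0 < D := by linarith
  have hD1 : 1 ≤ D ^ 7 := one_le_pow₀ (by linarith)
  obtain ⟨A, hne, hA, hcard, hquot, hdoubling⟩ :=
    hν.exists_subset_small_doubling hsup hM hD henergy
  set S := popularQuotients A (D ^ 7)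
  have hAS : (#A : ℝ) ≤ D ^ 8 * #S := calc
    (#A : ℝ) ≤ 2 * D ^ 7 * #S := card_le_mul_card_popularQuotients hne (by positivity) hdoubling
    _ ≤ D * D ^ 7 * #S := by gcongr; linarith
    _ = D ^ 8 * #S := by ring
  have hSpow (n : ℕ) : (#(S ^ n) : ℝ) ≤ (D ^ 15) ^ n * #A := calc
    (#(S ^ n) : ℝ) ≤ (2 * (D ^ 7) ^ 2) ^ n * #A :=
      card_popularQuotients_pow_le hne (by positivity) hdoubling n
    _ ≤ (D * (D ^ 7) ^ 2) ^ n * #A := by gcongr; linarith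
    _ = (D ^ 15) ^ n * #A := by ring
  obtain ⟨E, hE, hcover⟩ := exists_inv_subset_mul_popularQuotients hne hD1 hdoubling
  have hAinv : 1 / (4 * D) ≤ ∑ x ∈ A⁻¹, ν x := by simpa only [sum_inv_index, hν.inv_eq] using hA
  obtain ⟨x, hx⟩ := exists_le_sum_smul_of_subset_mul hν.nonneg (by positivity) (by positivity)
    hAinv hE hcover
  refine ⟨S, inv_popularQuotients, one_mem_popularQuotients hD1, fun n => ?_, ?_, ?_, x, ?_⟩
  · calc (#(S ^ n) : ℝ) ≤ (D ^ 15) ^ n * (D ^ 8 * #S) := (hSpow n).trans (by gcongr)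
      _ = D ^ (15 * n + 8) * #S := by rw [← pow_mul, ← mul_assoc, ← pow_add]
  · have hAA : (#A : ℝ) ≤ #(A⁻¹ * A) := mod_cast card_le_card_mul_left hne.inv
    calc #S * M ≤ D ^ 15 * #A * M := by gcongr; simpa using hSpow 1
      _ ≤ D ^ 15 * (#(A⁻¹ * A) * M) := by rw [mul_assoc]; gcongr
      _ ≤ D ^ 15 * (D * D ^ 5) := 
        mul_le_mul_of_nonneg_left (hquot.trans (by gcongr; linarith)) (by positivity)
      _ = D ^ 21 := by ring
  · calc 1 ≤ 4 * D * M * #A := hcard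
      _ ≤ D * D * M * (D ^ 8 * #S) := by gcongr; linarith
      _ = D ^ 10 * #S * M := by ring
  · calc 1 / D ^ 24 = 1 / (D * D) / (D * (D ^ 7) ^ 3) := by rw [div_div]; ring
      _ ≤ 1 / (4 * D) / (4 * (D ^ 7) ^ 3) := by gcongr <;> linarith
      _ ≤ ∑ g ∈ x • S ^ 2, ν g := hx

end Flattening

section Plateau

variable {p : ℕ} [Fact p.Prime] {l : ZMod p} {B : Finset (ZMod p)} {D : ℝ}

lemma prime_pow_three_mul_dyadicConvPow_le_of_plateau (hp2 : p ≠ 2) (hl : l ≠ 0) (hD : 4096 ≤ D)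
    (hB : D ^ 2000 ≤ #B) (j : ℕ)
    (hplateau : dyadicConvPow (hingeKernel l B) (j + 1) 1 / D ≤
      dyadicConvPow (hingeKernel l B) (j + 3) 1) :
    (p : ℝ) ^ 3 * dyadicConvPow (hingeKernel l B) (j + 1) 1 ≤ D ^ 2000 := by
  have hD1 : 1 ≤ D := by linarith
  have hB0 : (0 : ℝ) < #B := lt_of_lt_of_le (by positivity) hB
  have hBne : B.Nonempty := card_pos.1 (mod_cast hB0)
  have hκ := isSymmProb_hingeKernel l hBne
  have hM : 0 < dyadicConvPow (hingeKernel l B) (j + 1) 1 := (hκ.convPow j).conv_self_one_pos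
  have hMB := hκ.dyadicConvPow_one_le (hingeKernel_le l hBne) j
  obtain ⟨S, hS, h1, hgrowth, hSM, hlarge, x, hx⟩ :=
    (hκ.convPow (j + 1)).exists_approximate_group
      (M := dyadicConvPow (hingeKernel l B) (j + 1) 1)
      (hκ.convPow j).conv_self_le_conv_self_one hM hD hplateau
  set M := dyadicConvPow (hingeKernel l B) (j + 1) 1
  have hcard : D ^ 1990 ≤ #S := by
    refine le_of_mul_le_mul_left ?_ (by positivity : 0 < D ^ 10 * M)
    calc D ^ 10 * M * D ^ 1990 = D ^ 2000 * M := by rw [mul_right_comm, ← pow_add]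
      _ ≤ (#B : ℝ) * (1 / #B) := by gcongr
      _ = 1 := mul_one_div_cancel hB0.ne'
      _ ≤ D ^ 10 * M * #S := by linarith
  have hlarge' : 1024 * (D ^ 308) ^ 2 ≤ #S := calc
    1024 * (D ^ 308) ^ 2 ≤ D * (D ^ 308) ^ 2 := by gcongr; linarith
    _ = D ^ 617 := by rw [← pow_mul, ← pow_succ']
    _ ≤ D ^ 1990 := pow_le_pow_right₀ hD1 (by norm_num)
    _ ≤ #S := hcard
  obtain ⟨y, hy⟩ := hκ.exists_le_sum_smul_of_dyadicConvPow (j + 1) hx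
  have hlt : 1 / (#B : ℝ) < 1 / D ^ 24 := one_div_lt_one_div_of_lt (by positivity)
    ((pow_lt_pow_right₀ (by linarith) (by norm_num)).trans_le hB)
  obtain ⟨v, w, hv, hw, hvw⟩ := exists_hasFixer_of_lt_sum_hingeKernel hl hBne hS (hlt.trans_le hy)
  have hpivot := prime_pow_three_le_of_card_pow_twenty_le hp2 hS h1 (one_le_pow₀ hD1) (hgrowth 20)
    hlarge' hv hw hvw
  calc (p : ℝ) ^ 3 * M ≤ 16384 * (D ^ 308) ^ 4 * #S * M := by gcongr
    _ = 16384 * (D ^ 308) ^ 4 * (#S * M) := by ring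
    _ ≤ D ^ 2 * (D ^ 308) ^ 4 * D ^ 21 := by gcongr; nlinarith
    _ = D ^ 1255 := by rw [← pow_mul, ← pow_add, ← pow_add]
    _ ≤ D ^ 2000 := pow_le_pow_right₀ hD1 (by norm_num)

lemma dyadicConvPow_hingeKernel_one_le (hp2 : p ≠ 2) (hl : l ≠ 0) (hD : 4096 ≤ D)
    (hB : D ^ 2000 ≤ #B) (t : ℕ) :
    dyadicConvPow (hingeKernel l B) (2 * t + 1) 1 * D ^ t ≤ 1 ∨
      (p : ℝ) ^ 3 * dyadicConvPow (hingeKernel l B) (2 * t + 1) 1 ≤ D ^ 2000 := by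
  have hB1 : (1 : ℝ) ≤ #B := (one_le_pow₀ (by linarith)).trans hB
  have hBne : B.Nonempty := card_pos.1 (mod_cast hB1)
  have hκ := isSymmProb_hingeKernel l hBne
  induction t with
  | zero =>
    left
    rw [pow_zero, mul_one]
    exact (hκ.dyadicConvPow_one_le (hingeKernel_le l hBne) 0).trans
      ((div_le_one (by linarith)).2 hB1)
  | succ t ih =>
    have hanti : dyadicConvPow (hingeKernel l B) (2 * t + 3) 1 ≤
        dyadicConvPow (hingeKernel l B) (2 * t + 1) 1 :=
      (hκ.dyadicConvPow_one_anti (2 * t + 1)).trans (hκ.dyadicConvPow_one_anti (2 * t))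
    rw [show 2 * (t + 1) + 1 = 2 * t + 3 by ring]
    rcases le_or_gt (dyadicConvPow (hingeKernel l B) (2 * t + 1) 1 / D)
      (dyadicConvPow (hingeKernel l B) (2 * t + 3) 1) with hplateau | hdrop
    · right
      exact (by gcongr : (p : ℝ) ^ 3 * _ ≤ _).trans
        (prime_pow_three_mul_dyadicConvPow_le_of_plateau hp2 hl hD hB (2 * t) hplateau)
    · refine ih.imp (fun hsmall => ?_) (fun hflat => (by gcongr : (p : ℝ) ^ 3 * _ ≤ _).trans hflat)
      calc dyadicConvPow (hingeKernel l B) (2 * t + 3) 1 * D ^ (t + 1)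
          = dyadicConvPow (hingeKernel l B) (2 * t + 3) 1 * D * D ^ t := by ring
        _ ≤ dyadicConvPow (hingeKernel l B) (2 * t + 1) 1 * D ^ t := by
          gcongr; exact ((lt_div_iff₀ (by linarith)).1 hdrop).le
        _ ≤ 1 := hsmall

end Plateau

/-! ### Counting via correlations -/

section MeanZeroPart

variable {G X : Type*} [Group G] [Fintype G] [Fintype X] [MulAction G X]

/-- The projection of `f` to the functions of mean zero. -/
noncomputable def meanZeroPart (f : X → ℝ) (x : X) : ℝ := f x - (∑ y, f y) / Fintype.card X

variable [Nonempty X]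

lemma sum_meanZeroPart (f : X → ℝ) : ∑ x, meanZeroPart f x = 0 := by
  simp only [meanZeroPart, sum_sub_distrib, sum_const, card_univ, nsmul_eq_mul]
  field_simp
  ring

lemma sum_meanZeroPart_sq_le (f : X → ℝ) : ∑ x, meanZeroPart f x ^ 2 ≤ ∑ x, f x ^ 2 := by
  have hexpand : ∑ x, meanZeroPart f x ^ 2 =
      ∑ x, f x ^ 2 - (∑ x, f x) ^ 2 / Fintype.card X := by
    simp only [meanZeroPart, sub_sq, sum_add_distrib, sum_sub_distrib, ← sum_mul, ← mul_sum,
      sum_const, card_univ, nsmul_eq_mul]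
    field_simp
    ring
  rw [hexpand]
  exact sub_le_self _ (by positivity)

lemma correlation_eq_correlation_meanZeroPart_add {m : G → ℝ} (hm : ∑ g, m g = 1) (f : X → ℝ) :
    correlation m f = correlation m (meanZeroPart f) + (∑ x, f x) ^ 2 / Fintype.card X := by
  have hterm (g : G) : ∑ x, meanZeroPart f x * meanZeroPart f (g⁻¹ • x) =
      ∑ x, f x * f (g⁻¹ • x) - (∑ x, f x) ^ 2 / Fintype.card X := by
    simp only [meanZeroPart, sub_mul, mul_sub, sum_sub_distrib, ← sum_mul, ← mul_sum,
      sum_comp_smul g⁻¹ f, sum_const, card_univ, nsmul_eq_mul]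
    field_simp
    ring
  simp only [correlation_eq_sum, hterm, mul_sub, sum_sub_distrib, ← sum_mul, hm]
  ring

end MeanZeroPart

section Counting

open scoped LinearAlgebra.Projectivization

variable {F : Type*} [Field F]

/-- The indicator function of the affine points of the projective line with coordinate in `S`. -/
noncomputable def affineIndicator (S : Finset F) : ℙ F (Fin 2 → F) → ℝ :=
  Set.indicator (affinePoint '' S) 1

lemma sum_affineIndicator [Fintype F] (S : Finset F) : ∑ x, affineIndicator S x = #S := by
  classical
  rw [affineIndicator, ← coe_image, sum_indicator_subset 1 (subset_univ _)]
  simp [card_image_of_injective _ affinePoint_injective]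

lemma affineIndicator_sq (S : Finset F) (x : ℙ F (Fin 2 → F)) :
    affineIndicator S x ^ 2 = affineIndicator S x := by
  by_cases hx : x ∈ affinePoint '' (S : Set F) <;> simp [affineIndicator, hx]

variable [DecidableEq F] {l : F} {A B : Finset F}

/-- The pairs of elements of `A` whose inverses differ by `l`. -/
def inverseDifferencePairs (A : Finset F) (l : F) : Finset (F × F) :=
  (A ×ˢ A).filter fun x => x.1⁻¹ - x.2⁻¹ = l

lemma injOn_fst_inverseDifferencePairs (A : Finset F) (l : F) :
    Set.InjOn Prod.fst (inverseDifferencePairs A l : Set (F × F)) := by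
  rintro ⟨a, a₁⟩ h₁ ⟨_, a₂⟩ h₂ rfl
  have h₁ : a⁻¹ - a₁⁻¹ = l := (mem_filter.1 h₁).2
  have h₂ : a⁻¹ - a₂⁻¹ = l := (mem_filter.1 h₂).2
  rw [inv_injective (sub_right_injective (h₁.trans h₂.symm))]

lemma card_inverseDifferencePairs_le_card (A : Finset F) (l : F) :
    #(inverseDifferencePairs A l) ≤ #A :=
  card_le_card_of_injOn Prod.fst (fun _ h => (mem_product.1 (mem_filter.1 h).1).1)
    (injOn_fst_inverseDifferencePairs A l)

variable [Fintype F]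

lemma card_inverseDifferencePairs_le_sum_affineIndicator (hA : 0 ∉ A) {b b' : F} (hb : b ∈ B)
    (hb' : b' ∈ B) :
    (#(inverseDifferencePairs A l) : ℝ) ≤
      ∑ x, affineIndicator (A + B) x * affineIndicator (A + B) ((hingeWord l (b', b))⁻¹ • x) := by
  classical
  have hmem {a c : F} (ha : a ∈ A) (hc : c ∈ B) :
      affineIndicator (A + B) (affinePoint (a + c)) = 1 :=
    Set.indicator_of_mem (Set.mem_image_of_mem _ (mem_coe.2 (add_mem_add ha hc))) _
  have hterm (a : F × F) (ha : a ∈ inverseDifferencePairs A l) :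
      affineIndicator (A + B) (affinePoint (a.1 + b')) *
        affineIndicator (A + B) ((hingeWord l (b', b))⁻¹ • affinePoint (a.1 + b')) = 1 := by
    obtain ⟨hprod, hl⟩ := mem_filter.1 ha
    obtain ⟨h₁, h₂⟩ := mem_product.1 hprod
    rw [← hingeWord_smul_affinePoint (b := b) (ne_of_mem_of_not_mem h₂ hA)
      (ne_of_mem_of_not_mem h₁ hA) hl, inv_smul_smul,
      hingeWord_smul_affinePoint (ne_of_mem_of_not_mem h₂ hA) (ne_of_mem_of_not_mem h₁ hA) hl,
      hmem h₁ hb', hmem h₂ hb, mul_one]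
  have hinj : Set.InjOn (fun a : F × F => affinePoint (a.1 + b'))
      (inverseDifferencePairs A l : Set (F × F)) := fun a ha a' ha' h =>
    injOn_fst_inverseDifferencePairs A l ha ha' (add_right_cancel (affinePoint_injective h))
  have hnonneg (x) : 0 ≤ affineIndicator (A + B) x := Set.indicator_nonneg (by simp) x
  calc (#(inverseDifferencePairs A l) : ℝ)
      = ∑ x ∈ (inverseDifferencePairs A l).image fun a => affinePoint (a.1 + b'),
          affineIndicator (A + B) x *
            affineIndicator (A + B) ((hingeWord l (b', b))⁻¹ • x) := by
        rw [sum_image hinj, sum_congr rfl hterm, sum_const, nsmul_eq_mul, mul_one]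
    _ ≤ _ := sum_le_univ_sum_of_nonneg fun x => mul_nonneg (hnonneg _) (hnonneg _)

lemma card_inverseDifferencePairs_le_correlation (hA : 0 ∉ A) (hB : B.Nonempty) :
    (#(inverseDifferencePairs A l) : ℝ) ≤
      correlation (hingeDensity l B) (affineIndicator (A + B)) := by
  have hBB : (0 : ℝ) < #(B ×ˢ B) := by exact_mod_cast (hB.product hB).card_pos
  rw [correlation_eq_sum, hingeDensity, sum_empiricalDensity_mul, le_div_iff₀ hBB, mul_comm,
    ← nsmul_eq_mul]
  refine card_nsmul_le_sum _ _ _ fun b hb => ?_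
  exact card_inverseDifferencePairs_le_sum_affineIndicator hA (mem_product.1 hb).2
    (mem_product.1 hb).1

lemma abs_correlation_hingeDensity_div_pow_le (hB : B.Nonempty) {f : ℙ F (Fin 2 → F) → ℝ}
    (hf : ∑ x, f x = 0) (hf0 : 0 < ∑ x, f x ^ 2) (j : ℕ) :
    (|correlation (hingeDensity l B) f| / ∑ x, f x ^ 2) ^ 2 ^ (j + 2) ≤
      (Fintype.card F : ℝ) ^ 2 * dyadicConvPow (hingeKernel l B) (j + 1) 1 := by
  have hκ := isSymmProb_hingeKernel l hB
  set N := ∑ x, f x ^ 2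
  have hquasi : (|correlation (dyadicConvPow (hingeKernel l B) j) f| / N) ^ 2 ≤
      (Fintype.card F : ℝ) ^ 2 * dyadicConvPow (hingeKernel l B) (j + 1) 1 := by
    rw [div_pow, sq_abs, div_le_iff₀ (by positivity), dyadicConvPow, (hκ.convPow j).conv_self_one]
    exact correlation_projectiveLine_sq_le hf _
  calc (|correlation (hingeDensity l B) f| / N) ^ 2 ^ (j + 2)
      = (((|correlation (hingeDensity l B) f| / N) ^ 2) ^ 2 ^ j) ^ 2 := by
        rw [← pow_mul, ← pow_mul]; ring_nf
    _ ≤ ((|correlation (hingeKernel l B) f| / N) ^ 2 ^ j) ^ 2 := by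
        gcongr; exact abs_correlation_div_sq_le _ hf0
    _ ≤ (|correlation (dyadicConvPow (hingeKernel l B) j) f| / N) ^ 2 := by
        gcongr; exact hκ.abs_correlation_div_pow_le hf0 j
    _ ≤ _ := hquasi

lemma correlation_hingeDensity_le (hB : B.Nonempty) {f : ℙ F (Fin 2 → F) → ℝ}
    (hf : ∑ x, f x = 0) {j : ℕ} {δ : ℝ} (hδ : 0 ≤ δ)
    (hj : (Fintype.card F : ℝ) ^ 2 * dyadicConvPow (hingeKernel l B) (j + 1) 1 ≤ δ ^ 2 ^ (j + 2)) :
    correlation (hingeDensity l B) f ≤ δ * ∑ x, f x ^ 2 := by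
  rcases (sum_nonneg fun x _ => sq_nonneg (f x) : 0 ≤ ∑ x, f x ^ 2).eq_or_lt with hf0 | hf0
  · have hzero (x) : f x = 0 :=
      pow_eq_zero_iff two_ne_zero |>.1
        ((sum_eq_zero_iff_of_nonneg fun x _ => sq_nonneg (f x)).1 hf0.symm x (mem_univ x))
    simp [correlation, hzero]
  · have hpow := (abs_correlation_hingeDensity_div_pow_le hB hf hf0 j).trans hj
    exact (le_abs_self _).trans
      ((div_le_iff₀ hf0).1 (le_of_pow_le_pow_left₀ (by positivity) hδ hpow))

lemma card_inverseDifferencePairs_le (hA : 0 ∉ A) (hB : B.Nonempty) {j : ℕ} {δ : ℝ} (hδ : 0 ≤ δ)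
    (hj : (Fintype.card F : ℝ) ^ 2 * dyadicConvPow (hingeKernel l B) (j + 1) 1 ≤ δ ^ 2 ^ (j + 2)) :
    (#(inverseDifferencePairs A l) : ℝ) ≤
      (#(A + B) : ℝ) ^ 2 / Fintype.card F + δ * #(A + B) := by
  have : (0 : ℝ) < Fintype.card F := by exact_mod_cast Fintype.card_pos
  have : Nonempty (ℙ F (Fin 2 → F)) := ⟨affinePoint 0⟩
  set f := affineIndicator (A + B)
  calc (#(inverseDifferencePairs A l) : ℝ)
      ≤ correlation (hingeDensity l B) f := card_inverseDifferencePairs_le_correlation hA hB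
    _ = correlation (hingeDensity l B) (meanZeroPart f) +
          (#(A + B) : ℝ) ^ 2 / (Fintype.card F + 1) := by
        rw [correlation_eq_correlation_meanZeroPart_add (sum_hingeDensity l hB),
          sum_affineIndicator, card_projectiveLine, Nat.cast_succ]
    _ ≤ δ * ∑ x, f x ^ 2 + (#(A + B) : ℝ) ^ 2 / Fintype.card F := by
        gcongr
        · exact (correlation_hingeDensity_le hB (sum_meanZeroPart f) hδ hj).trans
            (mul_le_mul_of_nonneg_left (sum_meanZeroPart_sq_le f) hδ)
        · linarith
    _ = (#(A + B) : ℝ) ^ 2 / Fintype.card F + δ * #(A + B) := by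
        simp only [f, affineIndicator_sq, sum_affineIndicator]; ring

end Counting

section PowerSaving

variable {p : ℕ} [Fact p.Prime] {l : ZMod p} {B : Finset (ZMod p)}

lemma sq_mul_dyadicConvPow_hingeKernel_le {η : ℝ} {t : ℕ} (hp2 : p ≠ 2) (hl : l ≠ 0)
    (hη : η * 2000 ≤ 1 / 2) (ht : 5 / 2 ≤ η * t) (hp : 4096 ≤ (p : ℝ) ^ η)
    (hB : (p : ℝ) ^ (η * 2000) ≤ #B) :
    (p : ℝ) ^ 2 * dyadicConvPow (hingeKernel l B) (2 * t + 1) 1 ≤ (p : ℝ) ^ (-(1 / 2) : ℝ) := by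
  have hp1 : (1 : ℝ) ≤ p := by exact_mod_cast (Fact.out : p.Prime).one_le
  have hp0 : (0 : ℝ) < p := by linarith
  have hD : ((p : ℝ) ^ η) ^ 2000 = (p : ℝ) ^ (η * 2000) := by
    rw [← Real.rpow_mul_natCast hp0.le, Nat.cast_ofNat]
  have hBne : B.Nonempty := card_pos.1 (by exact_mod_cast (Real.rpow_pos_of_pos hp0 _).trans_le hB)
  have hM : 0 ≤ dyadicConvPow (hingeKernel l B) (2 * t + 1) 1 :=
    ((isSymmProb_hingeKernel l hBne).convPow _).nonneg 1
  rcases dyadicConvPow_hingeKernel_one_le hp2 hl hp (hD ▸ hB) t with hsmall | hflat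
  all_goals set M := dyadicConvPow (hingeKernel l B) (2 * t + 1) 1
  · have hsplit : (p : ℝ) ^ 2 = (p : ℝ) ^ (-(1 / 2) : ℝ) * (p : ℝ) ^ (5 / 2 : ℝ) := by
      rw [← Real.rpow_add hp0, ← Real.rpow_natCast]; norm_num
    calc (p : ℝ) ^ 2 * M = (p : ℝ) ^ (-(1 / 2) : ℝ) * (M * (p : ℝ) ^ (5 / 2 : ℝ)) := by
          rw [hsplit]; ring
      _ ≤ (p : ℝ) ^ (-(1 / 2) : ℝ) * (M * ((p : ℝ) ^ η) ^ t) := by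
          rw [← Real.rpow_mul_natCast hp0.le]; gcongr
      _ ≤ (p : ℝ) ^ (-(1 / 2) : ℝ) := mul_le_of_le_one_right (by positivity) hsmall
  · refine le_of_mul_le_mul_right ?_ hp0
    calc (p : ℝ) ^ 2 * M * p = (p : ℝ) ^ 3 * M := by ring
      _ ≤ (p : ℝ) ^ (η * 2000) := hflat.trans_eq hD
      _ ≤ (p : ℝ) ^ (1 / 2 : ℝ) := Real.rpow_le_rpow_of_exponent_le hp1 hη
      _ = (p : ℝ) ^ (-(1 / 2) : ℝ) * p := by
          rw [← Real.rpow_add_one hp0.ne']; norm_num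

lemma card_inverseDifferencePairs_le_of_large {A : Finset (ZMod p)} {η : ℝ} {t : ℕ} (hp2 : p ≠ 2)
    (hl : l ≠ 0) (hη : η * 2000 ≤ 1 / 2) (ht : 5 / 2 ≤ η * t) (hp : 4096 ≤ (p : ℝ) ^ η)
    (hA : 0 ∉ A) (hB : (p : ℝ) ^ (η * 2000) ≤ #B) :
    (#(inverseDifferencePairs A l) : ℝ) ≤
      (#(A + B) : ℝ) ^ 2 / p + (p : ℝ) ^ (-(1 / (2 : ℝ) ^ (2 * t + 3))) * #(A + B) := by
  have hp0 : (0 : ℝ) < p := by exact_mod_cast (Fact.out : p.Prime).pos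
  have hBne : B.Nonempty := card_pos.1 (by exact_mod_cast (Real.rpow_pos_of_pos hp0 _).trans_le hB)
  have hexp : ((p : ℝ) ^ (-(1 / (2 : ℝ) ^ (2 * t + 3)))) ^ 2 ^ (2 * t + 2) =
      (p : ℝ) ^ (-(1 / 2) : ℝ) := by
    rw [← Real.rpow_mul_natCast hp0.le]
    congr 1
    push_cast
    field_simp
    ring
  have hcount := card_inverseDifferencePairs_le (l := l) (j := 2 * t)
    (δ := (p : ℝ) ^ (-(1 / (2 : ℝ) ^ (2 * t + 3)))) hA hBne (by positivity)
    (by rw [hexp, ZMod.card]; exact sq_mul_dyadicConvPow_hingeKernel_le hp2 hl hη ht hp hB)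
  rwa [ZMod.card] at hcount

end PowerSaving

lemma one_le_two_mul_rpow_neg {x : ℝ} {n : ℕ} (hx : 0 < x) (hn : x ≤ 2 ^ 2 ^ n) :
    1 ≤ 2 * x ^ (-(1 / (2 : ℝ) ^ n)) := by
  have hroot : x ^ (1 / (2 : ℝ) ^ n) ≤ 2 := by
    rw [one_div, Real.rpow_inv_le_iff_of_pos hx.le zero_le_two (by positivity)]
    exact_mod_cast hn
  rwa [Real.rpow_neg hx.le, ← div_eq_mul_inv, one_le_div (by positivity)]

theorem exists_card_inverseDifferencePairs_le {ε : ℝ} (hε : 0 < ε) :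
    ∃ k : ℕ, ∀ (p : ℕ) [Fact p.Prime], p ≠ 2 → ∀ A B : Finset (ZMod p), 0 ∉ A →
      (p : ℝ) ^ ε ≤ #B → ∀ l ≠ 0, (#(inverseDifferencePairs A l) : ℝ) ≤
        (#(A + B) : ℝ) ^ 2 / p + 2 * (p : ℝ) ^ (-(1 / (2 : ℝ) ^ (k + 2))) * #(A + B) := by
  set η := min ε (1 / 2) / 2000 with hη
  have hη0 : 0 < η := by positivity
  have hηε : η * 2000 ≤ ε := by rw [hη]; linarith [min_le_left ε (1 / 2)]
  have hη2 : η * 2000 ≤ 1 / 2 := by rw [hη]; linarith [min_le_right ε (1 / 2)]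
  obtain ⟨t, ht⟩ := exists_nat_ge (5 / 2 / η)
  obtain ⟨k₀, hk₀⟩ := exists_nat_ge ((4096 : ℝ) ^ η⁻¹)
  rw [div_le_iff₀' hη0] at ht
  refine ⟨max (2 * t + 1) k₀, fun p _ hp2 A B hA hB l hl => ?_⟩
  have hp1 : (1 : ℝ) ≤ p := by exact_mod_cast (Fact.out : p.Prime).one_le
  have hp0 : (0 : ℝ) < p := by linarith
  set k := max (2 * t + 1) k₀
  rcases le_or_gt 4096 ((p : ℝ) ^ η) with hlarge | hsmall
  · have hexp : (p : ℝ) ^ (-(1 / (2 : ℝ) ^ (2 * t + 3))) ≤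
        (p : ℝ) ^ (-(1 / (2 : ℝ) ^ (k + 2))) := by
      have hle : 2 * t + 3 ≤ k + 2 := by omega
      gcongr
      exact one_le_two
    have hcount := card_inverseDifferencePairs_le_of_large hp2 hl hη2 ht hlarge hA
      ((Real.rpow_le_rpow_of_exponent_le hp1 hηε).trans hB)
    refine hcount.trans ?_
    gcongr
    linarith [Real.rpow_nonneg hp0.le (-(1 / (2 : ℝ) ^ (k + 2)))]
  · have hpk : (p : ℝ) ≤ 2 ^ 2 ^ (k + 2) := by
      have hpk₀ : (p : ℝ) ≤ k₀ :=
        ((Real.lt_rpow_inv_iff_of_pos hp0.le (by norm_num) hη0).2 hsmall).le.trans hk₀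
      have hkpow : k + 2 < 2 ^ 2 ^ (k + 2) := Nat.lt_two_pow_self.trans Nat.lt_two_pow_self
      exact hpk₀.trans (by exact_mod_cast (by omega : k₀ ≤ 2 ^ 2 ^ (k + 2)))
    have hBne : B.Nonempty :=
      card_pos.1 (by exact_mod_cast (Real.rpow_pos_of_pos hp0 _).trans_le hB)
    have hpairs : (#(inverseDifferencePairs A l) : ℝ) ≤ #(A + B) := by
      exact_mod_cast (card_inverseDifferencePairs_le_card A l).trans (card_le_card_add_right hBne)
    have hone := one_le_two_mul_rpow_neg hp0 hpk
    nlinarith [(by positivity : (0:ℝ) ≤ (#(A + B) : ℝ) ^ 2 / p)]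

end InverseDifferences

theorem stmt14 :
    ∀ ε : ℝ, 0 < ε →
      ∃ k : ℕ,
        ∀ (p : ℕ), p.Prime → Odd p →
          ∀ K : ℝ, 1 ≤ K →
            ∀ A B : Finset (ZMod p), (0 : ZMod p) ∉ A → A.Nonempty →
              (p : ℝ) ^ ε ≤ (B.card : ℝ) →
              ((sumSet p A B).card : ℝ) ≤ K * A.card →
              ∀ lam : ZMod p, lam ≠ 0 →
                (((A ×ˢ A).filter fun x => x.1⁻¹ - x.2⁻¹ = lam).card : ℝ) ≤
                  K ^ 2 * (A.card : ℝ) ^ 2 / p +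
                    2 * K * (A.card : ℝ) * (p : ℝ) ^ (-(1 / (2 : ℝ) ^ (k + 2))) := by
  intro ε hε
  obtain ⟨k, hk⟩ := exists_card_inverseDifferencePairs_le hε
  refine ⟨k, fun p hp hodd K _ A B hA _ hB hAB lam hlam => ?_⟩
  have : Fact p.Prime := ⟨hp⟩
  have hp2 : p ≠ 2 := by rintro rfl; exact absurd hodd (by decide)
  calc (((A ×ˢ A).filter fun x => x.1⁻¹ - x.2⁻¹ = lam).card : ℝ)
      ≤ (#(sumSet p A B) : ℝ) ^ 2 / p +
          2 * (p : ℝ) ^ (-(1 / (2 : ℝ) ^ (k + 2))) * #(sumSet p A B) := hk p hp2 A B hA hB lam hlam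
    _ ≤ (K * #A) ^ 2 / p + 2 * (p : ℝ) ^ (-(1 / (2 : ℝ) ^ (k + 2))) * (K * #A) := by gcongr
    _ = K ^ 2 * (A.card : ℝ) ^ 2 / p +
          2 * K * (A.card : ℝ) * (p : ℝ) ^ (-(1 / (2 : ℝ) ^ (k + 2))) := by ring
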